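/- arXiv:0802.0584 — 2 statements merged into one kernel-verified Lean document; each statement's English description precedes it below -/
import Mathlib

section
/- Let u ∈ F₂ and let ψ = σψ₁, where ψ₁ is a chain of type (C1) containing at least ‖u‖+1 factors of σ. If ‖τψ(u)‖ = ‖ψ(u)‖, then ‖σ^{i+1}ψ₁(u)‖ = ‖σ^{i}ψ₁(u)‖ for every integer i ≥ 0. -/
noncomputable section

/-- The free group of rank two. -/
abbrev F : Type := FreeGroup (Fin 2)

/-- The generator `a`. -/
def ga : F := FreeGroup.of 0

/-- The generator `b`. -/
def gb : F := FreeGroup.of 1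

/-- Build an automorphism of `F` from images of the generators together with
an explicit inverse. -/
def mkAut (x y xi yi : F)
    (h1 : FreeGroup.lift ![xi, yi] x = ga)
    (h2 : FreeGroup.lift ![xi, yi] y = gb)
    (h3 : FreeGroup.lift ![x, y] xi = ga)
    (h4 : FreeGroup.lift ![x, y] yi = gb) : MulAut F :=
  MonoidHom.toMulEquiv (FreeGroup.lift ![x, y]) (FreeGroup.lift ![xi, yi])
    (by
      ext i
      fin_cases i
      · simpa [ga] using h1
      · simpa [gb] using h2)
    (by
      ext i
      fin_cases i
      · simpa [ga] using h3
      · simpa [gb] using h4)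

/-- `σ : a ↦ ab, b ↦ b`. -/
def σ : MulAut F :=
  mkAut (ga * gb) gb (ga * gb⁻¹) gb
    (by simp [ga, gb]) (by simp [ga, gb]) (by simp [ga, gb]) (by simp [ga, gb])

/-- `τ : a ↦ a, b ↦ ba`. -/
def τ : MulAut F :=
  mkAut ga (gb * ga) ga (gb * ga⁻¹)
    (by simp [ga, gb]) (by simp [ga, gb]) (by simp [ga, gb]) (by simp [ga, gb])

/-- `δ₁ : a ↦ b⁻¹ab, b ↦ b`. -/
def δ₁ : MulAut F :=
  mkAut (gb⁻¹ * ga * gb) gb (gb * ga * gb⁻¹) gb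
    (by simp [ga, gb, mul_assoc]) (by simp [ga, gb]) (by simp [ga, gb, mul_assoc]) (by simp [ga, gb])

/-- `δ₂ : a ↦ bab⁻¹, b ↦ b`. -/
def δ₂ : MulAut F :=
  mkAut (gb * ga * gb⁻¹) gb (gb⁻¹ * ga * gb) gb
    (by simp [ga, gb, mul_assoc]) (by simp [ga, gb]) (by simp [ga, gb, mul_assoc]) (by simp [ga, gb])

/-- `δ₃ : a ↦ a, b ↦ a⁻¹ba`. -/
def δ₃ : MulAut F :=
  mkAut ga (ga⁻¹ * gb * ga) ga (ga * gb * ga⁻¹)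
    (by simp [ga, gb]) (by simp [ga, gb, mul_assoc]) (by simp [ga, gb]) (by simp [ga, gb, mul_assoc])

/-- `δ₄ : a ↦ a, b ↦ aba⁻¹`. -/
def δ₄ : MulAut F :=
  mkAut ga (ga * gb * ga⁻¹) ga (ga⁻¹ * gb * ga)
    (by simp [ga, gb]) (by simp [ga, gb, mul_assoc]) (by simp [ga, gb]) (by simp [ga, gb, mul_assoc])

/-- `π : a ↦ b, b ↦ a⁻¹`. -/
def pi' : MulAut F :=
  mkAut gb ga⁻¹ gb⁻¹ ga
    (by simp [ga, gb]) (by simp [ga, gb]) (by simp [ga, gb]) (by simp [ga, gb])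

/-- Word length of (the reduced word representing) an element of `F`. -/
def len (w : F) : ℕ := w.toWord.length

/-- Cyclic length: minimal word length among all conjugates. -/
def cyclen (w : F) : ℕ := sInf {n | ∃ g : F, len (g * w * g⁻¹) = n}

/-- The chain `τ^{m_k}σ^{l_k}⋯τ^{m_1}σ^{l_1}` of type (C1) determined by the list
`[(l_k, m_k), …, (l_1, m_1)]` of pairs of exponents. -/
def chainC1 (c : List (ℕ × ℕ)) : MulAut F :=
  (c.map fun p => τ ^ p.2 * σ ^ p.1).prod

/-- The chain `τ^{-m_k}σ^{-l_k}⋯τ^{-m_1}σ^{-l_1}` of type (C2) determined by the list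
`[(l_k, m_k), …, (l_1, m_1)]` of pairs of exponents. -/
def chainC2 (c : List (ℕ × ℕ)) : MulAut F :=
  (c.map fun p => (τ ^ p.2)⁻¹ * (σ ^ p.1)⁻¹).prod

/-- Number of factors of `σ` in a chain. -/
def sigmaCount (c : List (ℕ × ℕ)) : ℕ := (c.map Prod.fst).sum

/-- Number of factors of `τ` in a chain. -/
def tauCount (c : List (ℕ × ℕ)) : ℕ := (c.map Prod.snd).sum

/-- The length `Σ (l_i + m_i)` of a chain. -/
def chainLen (c : List (ℕ × ℕ)) : ℕ := sigmaCount c + tauCount c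

/-- A Whitehead automorphism of type (W1): it permutes `{a, a⁻¹, b, b⁻¹}`. -/
def IsW1 (β : MulAut F) : Prop :=
  β ga ∈ ({ga, ga⁻¹, gb, gb⁻¹} : Set F) ∧ β gb ∈ ({ga, ga⁻¹, gb, gb⁻¹} : Set F)

/-- A chain of type (C1). -/
def IsC1 (φ : MulAut F) : Prop := ∃ c : List (ℕ × ℕ), c ≠ [] ∧ φ = chainC1 c

/-- A chain of type (C2). -/
def IsC2 (φ : MulAut F) : Prop := ∃ c : List (ℕ × ℕ), c ≠ [] ∧ φ = chainC2 c

/-- A positive element: a product of the generators `a` and `b`. -/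
def IsPositive (w : F) : Prop := w ∈ Submonoid.closure ({ga, gb} : Set F)

/-- The four automorphisms `δ₁, δ₂, δ₃, δ₄`. -/
def δIdx : Fin 4 → MulAut F := ![δ₁, δ₂, δ₃, δ₄]

/-!
Up to conjugation, an element of `F` that is not a power of `b` is a cyclic sequence of letters
`a ^ ±1` with gaps `b ^ k` between them. A gap keeps its exponent under `σ` if the two letters
around it have different signs; the exponent increases by one between two letters `a`, and decreases
by one between two letters `a⁻¹`. Hence `σ` fixes the conjugacy class of `v := ψ₁(u)` as soon as no
gap of `v` lies between letters of equal signs.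

Conjugation by `θ : a ↦ a, b ↦ b⁻¹` inverts `σ`, and inverts `τ` up to an inner automorphism, so
`θ(u)` is obtained from `θ(v)` by applying `σ` and `τ`. If `v` contained a syllable `a b ^ k a` with
`k < 0`, then `θ(v)` would contain one with a positive exponent. Both `σ` and `τ` preserve such a
positive run, and each `σ` adds at least one to its sum of exponents, which in the end would exceed
`‖u‖ = ‖θ(u)‖`. Applying this to `u⁻¹` as well, no gap of `v` has exponent of the sign opposite to
both of its neighbours. For such a `v`, counting letters gap by gap shows that `‖τσ(v)‖` exceeds
`‖σ(v)‖` by at least the number of gaps between letters of equal signs. So there are none.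
-/

open FreeGroup hiding map_mul map_inv

section CyclicLength

variable {x y : F} {L : List (Fin 2 × Bool)}

lemma len_mul_le (x y : F) : len (x * y) ≤ len x + len y := FreeGroup.norm_mul_le x y

lemma len_inv (x : F) : len x⁻¹ = len x := norm_inv_eq

lemma exists_len_conj_eq_cyclen (w : F) : ∃ g : F, len (g * w * g⁻¹) = cyclen w :=
  Nat.sInf_mem (s := {n | ∃ g : F, len (g * w * g⁻¹) = n}) ⟨_, 1, rfl⟩

lemma cyclen_le_len_conj (g w : F) : cyclen w ≤ len (g * w * g⁻¹) :=
  Nat.sInf_le ⟨g, rfl⟩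

lemma cyclen_le_len (w : F) : cyclen w ≤ len w := by
  simpa using cyclen_le_len_conj 1 w

lemma cyclen_le_of_isConj (h : IsConj x y) : cyclen x ≤ cyclen y := by
  obtain ⟨c, rfl⟩ := isConj_iff.1 h
  obtain ⟨g, hg⟩ := exists_len_conj_eq_cyclen (c * x * c⁻¹)
  calc cyclen x ≤ len (g * c * x * (g * c)⁻¹) := cyclen_le_len_conj _ _
    _ = cyclen (c * x * c⁻¹) := by rw [← hg]; group

lemma cyclen_eq_of_isConj (h : IsConj x y) : cyclen x = cyclen y :=
  (cyclen_le_of_isConj h).antisymm (cyclen_le_of_isConj h.symm)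

lemma cyclen_inv_le (w : F) : cyclen w⁻¹ ≤ cyclen w := by
  obtain ⟨g, hg⟩ := exists_len_conj_eq_cyclen w
  calc cyclen w⁻¹ ≤ len (g * w⁻¹ * g⁻¹) := cyclen_le_len_conj _ _
    _ = len (g * w * g⁻¹)⁻¹ := by group
    _ = cyclen w := by rw [len_inv, hg]

lemma len_list_prod_le (l : List F) : len l.prod ≤ (l.map len).sum := by
  induction l with
  | nil => simp [len]
  | cons x l ih =>
    simp only [List.prod_cons, List.map_cons, List.sum_cons]
    exact (len_mul_le x l.prod).trans (by gcongr)

lemma len_pow_le (w : F) (n : ℕ) : len (w ^ n) ≤ n * len w := by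
  simpa using len_list_prod_le (List.replicate n w)

lemma len_zpow_le (w : F) : ∀ k : ℤ, len (w ^ k) ≤ k.natAbs * len w
  | .ofNat n => by simpa using len_pow_le w n
  | .negSucc n => by simpa [len_inv] using len_pow_le w (n + 1)

lemma len_mk (h : IsReduced L) : len (mk L) = L.length := by
  rw [len, toWord_mk, h.reduce_eq]

/- The power `w ^ n` has length `n * L.length`, but conjugation changes lengths only by a bounded
amount, so a shorter conjugate of `w` would make `w ^ n` too short for large `n`. -/
lemma cyclen_mk (h : IsCyclicallyReduced L) : cyclen (mk L) = L.length := by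
  refine le_antisymm ((cyclen_le_len _).trans (len_mk h.isReduced).le) ?_
  obtain ⟨g, hg⟩ := exists_len_conj_eq_cyclen (mk L)
  set m := len g
  have length_le (n : ℕ) : n * L.length ≤ n * cyclen (mk L) + 2 * m :=
    calc n * L.length = len (mk L ^ n) := by
          rw [pow_mk, len_mk (h.flatten_replicate n).isReduced]; simp
      _ = len (g⁻¹ * (g * mk L * g⁻¹) ^ n * g) := by rw [conj_pow]; group
      _ ≤ len g⁻¹ + len ((g * mk L * g⁻¹) ^ n) + len g :=
          (len_mul_le _ _).trans (by gcongr; exact len_mul_le _ _)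
      _ ≤ m + n * cyclen (mk L) + m := by
          gcongr
          · exact (len_inv g).le
          · exact hg ▸ len_pow_le _ n
      _ = n * cyclen (mk L) + 2 * m := by ring
  by_contra! hlt
  nlinarith [length_le (2 * m + 1)]

lemma isCyclicallyReduced_iff_append_self : IsCyclicallyReduced L ↔ IsReduced (L ++ L) := by
  simp only [isCyclicallyReduced_iff, FreeGroup.IsReduced, List.isChain_append]
  tauto

lemma exists_isCyclicallyReduced_isConj_mk (w : F) :
    ∃ L, IsCyclicallyReduced L ∧ IsConj (mk L) w := by
  refine ⟨_, reduceCyclically.isCyclicallyReduced (isReduced_toWord (x := w)),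
    isConj_iff.2 ⟨mk (reduceCyclically.conjugator w.toWord), ?_⟩⟩
  rw [inv_mk, mul_mk, mul_mk, reduceCyclically.conj_conjugator_reduceCyclically, mk_toWord]

lemma len_map_le {f : F →* F} {K : ℕ} (hf : ∀ i, len (f (of i)) ≤ K) (w : F) :
    len (f w) ≤ K * len w := by
  have le_length (L : List (Fin 2 × Bool)) : len (f (mk L)) ≤ K * L.length := by
    induction L with
    | nil => simp [← one_eq_mk, len]
    | cons p L ih =>
      have head_le : len (f (mk [p])) ≤ K := by
        obtain ⟨i, _ | _⟩ := p
        · rw [show (mk [(i, false)] : F) = (of i)⁻¹ from rfl, map_inv]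
          exact (len_inv _).trans_le (hf i)
        · exact hf i
      calc len (f (mk (p :: L))) = len (f (mk [p]) * f (mk L)) := by rw [← map_mul, mul_mk]; rfl
        _ ≤ K + K * L.length := (len_mul_le _ _).trans (add_le_add head_le ih)
        _ = K * (p :: L).length := by rw [List.length_cons]; ring
  simpa only [mk_toWord, len] using le_length w.toWord

lemma cyclen_map_le {f : F →* F} {K : ℕ} (hf : ∀ i, len (f (of i)) ≤ K) (w : F) :
    cyclen (f w) ≤ K * cyclen w := by
  obtain ⟨g, hg⟩ := exists_len_conj_eq_cyclen w
  calc cyclen (f w) ≤ len (f g * f w * (f g)⁻¹) := cyclen_le_len_conj _ _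
    _ = len (f (g * w * g⁻¹)) := by simp only [map_mul, map_inv]
    _ ≤ K * cyclen w := hg ▸ len_map_le hf _

end CyclicLength

section Automorphisms

lemma isConj_map {G : Type*} [Group G] {x y : G} (f : MulAut G) (h : IsConj x y) :
    IsConj (f x) (f y) :=
  f.toMonoidHom.map_isConj h

@[simp] lemma σ_ga : σ ga = ga * gb := by simp [σ, mkAut, ga]

@[simp] lemma σ_gb : σ gb = gb := by simp [σ, mkAut, gb]

@[simp] lemma τ_ga : τ ga = ga := by simp [τ, mkAut, ga]

@[simp] lemma τ_gb : τ gb = gb * ga := by simp [τ, mkAut, gb]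

/-- The automorphism `θ : a ↦ a, b ↦ b⁻¹`. Conjugation by `θ` inverts `σ`, and inverts `τ` up to an
inner automorphism. -/
def θ : MulAut F :=
  mkAut ga gb⁻¹ ga gb⁻¹ (by simp [ga, gb]) (by simp [ga, gb]) (by simp [ga, gb]) (by simp [ga, gb])

@[simp] lemma θ_ga : θ ga = ga := by simp [θ, mkAut, ga]

@[simp] lemma θ_gb : θ gb = gb⁻¹ := by simp [θ, mkAut, gb]

lemma mulAut_ext {f g : MulAut F} (ha : f ga = g ga) (hb : f gb = g gb) : f = g := by
  apply MulEquiv.toMonoidHom_injective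
  ext i
  fin_cases i
  exacts [ha, hb]

lemma σ_θ_σ (w : F) : σ (θ (σ w)) = θ w :=
  DFunLike.congr_fun (mulAut_ext (f := σ * θ * σ) (by simp) (by simp)) w

lemma τ_θ_τ (w : F) : τ (θ (τ w)) = ga⁻¹ * θ w * ga := by
  have h : τ * θ * τ = MulAut.conj ga⁻¹ * θ := mulAut_ext (by simp) (by simp [mul_assoc])
  simpa using DFunLike.congr_fun h w

lemma cyclen_θ_le (w : F) : cyclen (θ w) ≤ cyclen w := by
  have len_le (i : Fin 2) : len (θ.toMonoidHom (of i)) ≤ 1 := by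
    fin_cases i
    · exact (congrArg len θ_ga).trans_le (by simp [len, ga])
    · exact (congrArg len θ_gb).trans_le (by simp [len, gb])
  exact (cyclen_map_le len_le w).trans_eq (one_mul _)

lemma cyclen_τ_le (w : F) : cyclen (τ w) ≤ 2 * cyclen w := by
  have len_le (i : Fin 2) : len (τ.toMonoidHom (of i)) ≤ 2 := by
    fin_cases i
    · exact (congrArg len τ_ga).trans_le (by simp [len, ga])
    · exact (congrArg len τ_gb).trans_le ((len_mul_le gb ga).trans (by simp [len, ga, gb]))
  exact cyclen_map_le len_le w

end Automorphisms

section Gaps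

/-- A syllable `b ^ exp` between two consecutive occurrences of `a ^ ±1` in a reduced word; `left`
and `right` are the signs of these occurrences, `true` standing for `a` and `false` for `a⁻¹`. -/
@[ext]
structure Gap where
  left : Bool
  exp : ℤ
  right : Bool
  exp_ne_zero : left ≠ right → exp ≠ 0

/-- The part of the letter `a ^ ±1` of sign `e` that is attributed to the gap on its right. With
`gapEnd`, it cuts `a` as `1 * a` and `a⁻¹` as `a⁻¹ * 1`, so that `σ` maps gaps to gaps. -/
def gapStart (e : Bool) : F := if e then ga else 1

/-- The part of the letter `a ^ ±1` of sign `e` that is attributed to the gap on its left. -/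
def gapEnd (e : Bool) : F := if e then 1 else ga⁻¹

@[simp] lemma τ_gapStart (e : Bool) : τ (gapStart e) = gapStart e := by
  cases e <;> simp [gapStart]

@[simp] lemma τ_gapEnd (e : Bool) : τ (gapEnd e) = gapEnd e := by
  cases e <;> simp [gapEnd]

lemma gapEnd_mul_gapStart (e : Bool) : gapEnd e * gapStart e = mk [(0, e)] := by
  cases e <;> rfl

namespace Gap

/-- The group element represented by a gap, together with its parts of the adjacent letters. -/
def val (x : Gap) : F := gapStart x.left * gb ^ x.exp * gapEnd x.right

/-- The gap `a b ^ k (a)`. -/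
def pos (k : ℕ) : Gap := ⟨true, k, true, by simp⟩

/-- The image of a gap under `σ`. -/
def shift (x : Gap) : Gap where
  left := x.left
  exp := x.exp + (if x.left then 1 else 0) - (if x.right then 0 else 1)
  right := x.right
  exp_ne_zero h := by
    have := x.exp_ne_zero h
    revert h
    cases x.left <;> cases x.right <;> simp [this]

/-- The image of a gap under `θ`. -/
def neg (x : Gap) : Gap := ⟨x.left, -x.exp, x.right, fun h => neg_ne_zero.2 (x.exp_ne_zero h)⟩

/-- The gap read in the inverse word. -/
def inv (x : Gap) : Gap :=
  ⟨!x.right, -x.exp, !x.left, fun h => neg_ne_zero.2 (x.exp_ne_zero fun h' => h (by rw [h']))⟩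

variable (x : Gap)

lemma val_pos (k : ℕ) : (pos k).val = ga * gb ^ k := by
  simp [val, pos, gapStart, gapEnd]

lemma σ_val : σ x.val = x.shift.val := by
  obtain ⟨_ | _, k, _ | _, -⟩ := x <;>
    simp [val, shift, gapStart, gapEnd, zpow_add, zpow_sub, mul_assoc] <;> group

lemma θ_val : θ x.val = x.neg.val := by
  obtain ⟨_ | _, k, _ | _, -⟩ := x <;> simp [val, neg, gapStart, gapEnd]

lemma val_inv : x.inv.val = x.val⁻¹ := by
  obtain ⟨_ | _, k, _ | _, -⟩ := x <;> simp [val, inv, gapStart, gapEnd, mul_assoc]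

lemma shift_pos (k : ℕ) : (pos k).shift = pos (k + 1) := by
  ext <;> simp [shift, pos]

lemma len_val_add_le : len x.val + x.right.toNat ≤ x.exp.natAbs + 1 + x.left.toNat := by
  have len_start : len (gapStart x.left) = x.left.toNat := by
    cases x.left <;> simp [gapStart, len, ga]
  have len_exp : len (gb ^ x.exp) ≤ x.exp.natAbs := by
    simpa [len, gb] using len_zpow_le gb x.exp
  have len_end : len (gapEnd x.right) + x.right.toNat = 1 := by
    cases x.right <;> simp [gapEnd, len, ga]
  have := len_mul_le (gapStart x.left * gb ^ x.exp) (gapEnd x.right)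
  have := len_mul_le (gapStart x.left) (gb ^ x.exp)
  rw [val]
  lia

lemma shift_eq_self {x : Gap} (h : x.left ≠ x.right) : x.shift = x := by
  obtain ⟨_ | _, k, _ | _, h'⟩ := x <;> simp [shift] at h ⊢

end Gap

/-- The alternating word `b (a b) ^ n`, or `b⁻¹ (a⁻¹ b⁻¹) ^ n`, whose letters have sign `s`. -/
def altWord (s : Bool) : ℕ → List (Fin 2 × Bool)
  | 0 => [(1, s)]
  | n + 1 => (1, s) :: (0, s) :: altWord s n

lemma mk_altWord_true (n : ℕ) : mk (altWord true n) * ga = (gb * ga) ^ (n + 1) := by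
  induction n with
  | zero => rfl
  | succ n ih =>
    rw [pow_succ', ← ih, ← mul_assoc]
    rfl

lemma mk_altWord_false (n : ℕ) : ga⁻¹ * mk (altWord false n) = ((gb * ga) ^ (n + 1))⁻¹ := by
  induction n with
  | zero => rfl
  | succ n ih =>
    rw [pow_succ, mul_inv_rev, ← ih, mul_inv_rev, mul_assoc]
    rfl

lemma snd_eq_of_mem_altWord {s : Bool} {n : ℕ} {p : Fin 2 × Bool} (hp : p ∈ altWord s n) :
    p.2 = s := by
  induction n with
  | zero => simp_all [altWord]
  | succ n ih =>
    simp only [altWord, List.mem_cons] at hp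
    rcases hp with rfl | rfl | hp
    exacts [rfl, rfl, ih hp]

@[simp] lemma head?_altWord (s : Bool) (n : ℕ) : (altWord s n).head? = some (1, s) := by
  cases n <;> rfl

@[simp] lemma getLast?_altWord (s : Bool) (n : ℕ) : (altWord s n).getLast? = some (1, s) := by
  induction n with
  | zero => rfl
  | succ n ih => simp [altWord, List.getLast?_cons, ih]

@[simp] lemma length_altWord (s : Bool) (n : ℕ) : (altWord s n).length = 2 * n + 1 := by
  induction n with
  | zero => rfl
  | succ n ih => simp only [altWord, List.length_cons, ih]; ring

namespace Gap

/-- The reduced word representing the image of a gap under `τ`. -/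
def τWord : Gap → List (Fin 2 × Bool)
  | ⟨l, .ofNat 0, _, _⟩ => [(0, l)]
  | ⟨l, .ofNat (n + 1), r, _⟩ =>
    (if l then [(0, true)] else []) ++ altWord true n ++ (if r then [(0, true)] else [])
  | ⟨l, .negSucc n, r, _⟩ =>
    (if l then [] else [(0, false)]) ++ altWord false n ++ (if r then [] else [(0, false)])

variable (x : Gap)

lemma mk_τWord : FreeGroup.mk x.τWord = τ x.val := by
  obtain ⟨l, (_ | n) | n, r, h⟩ := x
  · cases l <;> cases r <;> simp [τWord, val, gapStart, gapEnd] at h ⊢ <;> rfl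
  · have mk_left : FreeGroup.mk (if l then [(0, true)] else []) = gapStart l := by cases l <;> rfl
    have mk_right : FreeGroup.mk (if r then [(0, true)] else []) = ga * gapEnd r := by
      cases r <;> simp [gapEnd] <;> rfl
    rw [τWord, ← mul_mk, ← mul_mk, mk_left, mk_right, mul_assoc, ← mul_assoc _ ga,
      mk_altWord_true, ← mul_assoc, val]
    simp [← zpow_natCast]
  · have mk_left : FreeGroup.mk (if l then [] else [(0, false)]) = gapStart l * ga⁻¹ := by
      cases l <;> simp [gapStart] <;> rfl
    have mk_right : FreeGroup.mk (if r then [] else [(0, false)]) = gapEnd r := by cases r <;> rfl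
    rw [τWord, ← mul_mk, ← mul_mk, mk_left, mk_right, mul_assoc (gapStart l),
      mk_altWord_false, val]
    simp

lemma exists_forall_mem_τWord_snd_eq : ∃ s, ∀ p ∈ x.τWord, p.2 = s := by
  obtain ⟨l, (_ | n) | n, r, h⟩ := x
  · exact ⟨l, by simp [τWord]⟩
  · refine ⟨true, List.forall_mem_append.2 ⟨List.forall_mem_append.2 ⟨?_, ?_⟩, ?_⟩⟩
    exacts [by cases l <;> simp, fun _ => snd_eq_of_mem_altWord, by cases r <;> simp]
  · refine ⟨false, List.forall_mem_append.2 ⟨List.forall_mem_append.2 ⟨?_, ?_⟩, ?_⟩⟩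
    exacts [by cases l <;> simp, fun _ => snd_eq_of_mem_altWord, by cases r <;> simp]

lemma τWord_ne_nil : x.τWord ≠ [] := by
  obtain ⟨l, (_ | _ | n) | _ | n, r, h⟩ := x <;> simp [τWord, altWord]

lemma isReduced_τWord : FreeGroup.IsReduced x.τWord := by
  obtain ⟨s, hs⟩ := x.exists_forall_mem_τWord_snd_eq
  refine List.Pairwise.isChain (List.pairwise_of_forall_mem_list fun p hp q hq _ => ?_)
  rw [hs p hp, hs q hq]

lemma fst_eq_zero_iff_of_mem_head?_τWord {p : Fin 2 × Bool} (hp : p ∈ x.τWord.head?) :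
    p.1 = 0 ↔ p.2 = x.left := by
  obtain ⟨_ | _, (_ | n) | n, r, h⟩ := x <;> simp [τWord] at hp <;> simp [← hp]

lemma fst_eq_zero_iff_of_mem_getLast?_τWord {p : Fin 2 × Bool} (hp : p ∈ x.τWord.getLast?) :
    p.1 = 0 ↔ p.2 = x.right := by
  obtain ⟨_ | _, (_ | n) | n, _ | _, h⟩ := x <;>
    simp [τWord, List.getLast?_cons] at h hp <;> simp [← hp]

lemma length_τWord_pos (k : ℕ) : (pos k).τWord.length = 2 * k + 1 := by
  obtain _ | k := k
  · rfl
  · calc ([(0, true)] ++ altWord true k ++ [(0, true)]).length = 2 * k + 1 + 1 + 1 := by simp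
      _ = 2 * (k + 1) + 1 := by ring

/-- A gap whose exponent does not have the sign opposite to both of its adjacent letters. -/
def IsTame : Prop :=
  (x.left = true → x.right = true → 0 ≤ x.exp) ∧ (x.left = false → x.right = false → x.exp ≤ 0)

lemma natAbs_exp_add_le_length_τWord (hpos : x.left = true → x.right = true → 0 < x.exp)
    (hneg : x.left = false → x.right = false → x.exp < 0) :
    x.exp.natAbs + 1 + (if x.left = x.right then 1 else 0) ≤ x.τWord.length := by
  obtain ⟨_ | _, (_ | n) | n, _ | _, h⟩ := x <;> simp [τWord] at h hpos hneg ⊢ <;> omega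

lemma IsTame.natAbs_exp_shift_add_le {x : Gap} (h : x.IsTame) :
    x.shift.exp.natAbs + 1 + (if x.left = x.right then 1 else 0) ≤ x.shift.τWord.length := by
  refine x.shift.natAbs_exp_add_le_length_τWord (fun hl hr => ?_) fun hl hr => ?_
  · have := h.1 hl hr
    simp_all [shift]
  · have := h.2 hl hr
    simp_all [shift]
    omega

end Gap

/-- The sequence of gaps `g` can be read consecutively, from a letter `a ^ ±1` of sign `e` to one of
sign `e'`. -/
def IsPath : Bool → List Gap → Bool → Prop
  | e, [], e' => e = e'
  | e, x :: g, e' => x.left = e ∧ IsPath x.right g e'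

/-- The product of the values of a sequence of gaps. -/
def pathProd (g : List Gap) : F := (g.map Gap.val).prod

variable {e e' : Bool} {g g₁ g₂ : List Gap} {x : Gap}

@[simp] lemma pathProd_append : pathProd (g₁ ++ g₂) = pathProd g₁ * pathProd g₂ := by
  simp [pathProd]

@[simp] lemma pathProd_cons : pathProd (x :: g) = x.val * pathProd g := by simp [pathProd]

@[simp] lemma pathProd_nil : pathProd [] = 1 := rfl

lemma isPath_append_iff : IsPath e (g₁ ++ g₂) e' ↔ ∃ c, IsPath e g₁ c ∧ IsPath c g₂ e' := by
  induction g₁ generalizing e with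
  | nil => simp [IsPath]
  | cons x g₁ ih => simp [IsPath, ih, and_assoc]

lemma isPath_map {f : Gap → Gap} (hl : ∀ x, (f x).left = x.left) (hr : ∀ x, (f x).right = x.right) :
    IsPath e (g.map f) e' ↔ IsPath e g e' := by
  induction g generalizing e with
  | nil => rfl
  | cons x g ih => simp only [List.map_cons, IsPath, hl, hr, ih]

lemma IsPath.map_shift (h : IsPath e g e') : IsPath e (g.map Gap.shift) e' :=
  (isPath_map (f := Gap.shift) (fun _ => rfl) fun _ => rfl).2 h

lemma IsPath.map_neg (h : IsPath e g e') : IsPath e (g.map Gap.neg) e' :=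
  (isPath_map (f := Gap.neg) (fun _ => rfl) fun _ => rfl).2 h

lemma IsPath.reverse_map_inv (h : IsPath e g e') : IsPath (!e') (g.map Gap.inv).reverse (!e) := by
  induction g generalizing e with
  | nil => simpa [IsPath] using h.symm
  | cons x g ih =>
    rw [List.map_cons, List.reverse_cons, isPath_append_iff]
    exact ⟨_, ih h.2, rfl, congrArg not h.1⟩

lemma pathProd_reverse_map_inv (g : List Gap) :
    pathProd (g.map Gap.inv).reverse = (pathProd g)⁻¹ := by
  induction g with
  | nil => simp
  | cons x g ih => simp [ih, Gap.val_inv]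

lemma map_pathProd {f : MulAut F} {s : Gap → Gap} (hf : ∀ x, f x.val = (s x).val) (g : List Gap) :
    f (pathProd g) = pathProd (g.map s) := by
  simp [pathProd, map_list_prod, Function.comp_def, hf]

lemma τ_pathProd (g : List Gap) : τ (pathProd g) = mk (g.flatMap Gap.τWord) := by
  induction g with
  | nil => simp [← one_eq_mk]
  | cons x g ih => simp [ih, ← Gap.mk_τWord]

lemma IsPath.isChain (h : IsPath e g e') : g.IsChain (·.right = ·.left) := by
  induction g generalizing e with
  | nil => exact .nil
  | cons x g ih =>
    cases g with
    | nil => exact .singleton _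
    | cons y g => exact .cons_cons h.2.1.symm (ih h.2)

lemma IsPath.isReduced_flatMap_τWord (h : IsPath e g e') :
    FreeGroup.IsReduced (g.flatMap Gap.τWord) := by
  rw [List.flatMap, FreeGroup.IsReduced, List.isChain_flatten (by simp [Gap.τWord_ne_nil])]
  refine ⟨by simpa using fun x _ => x.isReduced_τWord, (List.isChain_map _).2 <|
    h.isChain.imp fun x y hxy p hp q hq hpq => ?_⟩
  have hp' := x.fst_eq_zero_iff_of_mem_getLast?_τWord hp
  have hq' := y.fst_eq_zero_iff_of_mem_head?_τWord hq
  rw [hpq, hq', hxy] at hp'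
  generalize p.2 = s, q.2 = t, y.left = c at hp' ⊢
  decide +revert

lemma IsPath.isCyclicallyReduced_flatMap_τWord (h : IsPath e g e) :
    IsCyclicallyReduced (g.flatMap Gap.τWord) := by
  rw [isCyclicallyReduced_iff_append_self, ← List.flatMap_append]
  exact (isPath_append_iff.2 ⟨e, h, h⟩).isReduced_flatMap_τWord

lemma IsPath.cyclen_τ_pathProd (h : IsPath e g e) :
    cyclen (τ (pathProd g)) = (g.map fun x => x.τWord.length).sum := by
  rw [τ_pathProd, cyclen_mk h.isCyclicallyReduced_flatMap_τWord, List.length_flatMap]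

lemma IsPath.len_pathProd_add_le (hg : IsPath e g e') :
    len (pathProd g) + e'.toNat ≤ (g.map fun x => x.exp.natAbs + 1).sum + e.toNat := by
  induction g generalizing e with
  | nil =>
    obtain rfl : e = e' := hg
    simp [len]
  | cons x g ih =>
    obtain ⟨rfl, hg⟩ := hg
    have := len_mul_le x.val (pathProd g)
    have := x.len_val_add_le
    have := ih hg
    rw [pathProd_cons, List.map_cons, List.sum_cons]
    lia

lemma IsPath.cyclen_pathProd_le (hg : IsPath e g e) :
    cyclen (pathProd g) ≤ (g.map fun x => x.exp.natAbs + 1).sum :=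
  (cyclen_le_len _).trans (Nat.add_le_add_iff_right.1 hg.len_pathProd_add_le)

/- Passing from `σ v` to `τ (σ v)` lengthens every tame gap between letters of equal signs, and
shortens no gap. -/
lemma IsPath.map_shift_eq_self (hg : IsPath e g e) (htame : ∀ x ∈ g, x.IsTame)
    (h : cyclen (τ (pathProd (g.map Gap.shift))) = cyclen (pathProd (g.map Gap.shift))) :
    g.map Gap.shift = g := by
  have natAbs_exp_add_le {x : Gap} (hx : x ∈ g) :
      x.shift.exp.natAbs + 1 ≤ x.shift.τWord.length :=
    le_of_add_le_left (htame x hx).natAbs_exp_shift_add_le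
  have sum_le : (g.map fun x => x.shift.τWord.length).sum ≤
      (g.map fun x => x.shift.exp.natAbs + 1).sum := by
    have := hg.map_shift.cyclen_pathProd_le
    rw [← h, hg.map_shift.cyclen_τ_pathProd] at this
    simpa only [List.map_map, Function.comp_def] using this
  have left_ne_right {x : Gap} (hx : x ∈ g) : x.left ≠ x.right := fun heq =>
    have lt : x.shift.exp.natAbs + 1 < x.shift.τWord.length := Nat.succ_le_iff.1 <| by
      simpa only [heq, if_true] using (htame x hx).natAbs_exp_shift_add_le
    sum_le.not_gt (List.sum_lt_sum _ _ (fun _ => natAbs_exp_add_le) ⟨x, hx, lt⟩)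
  exact (List.map_congr_left fun x hx => Gap.shift_eq_self (left_ne_right hx)).trans (List.map_id g)

end Gaps

section Reading

variable {e e' : Bool} {M : List (Fin 2 × Bool)}

lemma mk_cons (p : Fin 2 × Bool) (M : List (Fin 2 × Bool)) : mk (p :: M) = mk [p] * mk M :=
  (mul_mk (L₁ := [p])).symm

lemma mk_one_singleton (s : Bool) : mk [(1, s)] = gb ^ (if s then 1 else -1 : ℤ) := by
  cases s <;> rfl

/- The gap being read has collected the exponent `k` so far; the hypothesis on the next letter says
that it neither cancels against `b ^ k` nor, when `k = 0`, against the letter opening the gap. -/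
lemma exists_path_of_isReduced_append (k : ℤ) (hM : FreeGroup.IsReduced (M ++ [(0, e')]))
    (hhead : ∀ p ∈ (M ++ [(0, e')]).head?,
      (p.1 = 0 → e ≠ p.2 → k ≠ 0) ∧ (p.1 = 1 → if p.2 then 0 ≤ k else k ≤ 0)) :
    ∃ g, IsPath e g e' ∧ pathProd g = gapStart e * gb ^ k * mk M * gapEnd e' := by
  induction M generalizing e k with
  | nil =>
    exact ⟨[⟨e, k, e', (hhead (0, e') rfl).1 rfl⟩], ⟨rfl, rfl⟩,
      by simp [Gap.val, ← one_eq_mk]⟩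
  | cons p M ih =>
    obtain ⟨hnext, hM'⟩ := List.isChain_cons.1 hM
    obtain ⟨h0, h1⟩ := hhead p rfl
    obtain ⟨i, s⟩ := p
    obtain rfl | rfl : i = 0 ∨ i = 1 := by fin_cases i <;> simp
    · obtain ⟨g, hg, hprod⟩ := ih (e := s) 0 hM' fun q hq =>
        ⟨fun hq0 hs => (hs (hnext q hq hq0.symm)).elim, fun _ => by simp⟩
      refine ⟨⟨e, k, s, h0 rfl⟩ :: g, ⟨rfl, hg⟩, ?_⟩
      rw [pathProd_cons, hprod, mk_cons, ← gapEnd_mul_gapStart]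
      simp [Gap.val, mul_assoc]
    · have k_add_sign_ne_zero : k + (if s then 1 else -1) ≠ 0 := by
        grind
      obtain ⟨g, hg, hprod⟩ := ih (e := e) (k + if s then 1 else -1) hM' fun q hq =>
        ⟨fun _ _ => k_add_sign_ne_zero, fun hq1 => by
          rw [← hnext q hq hq1.symm]
          grind⟩
      refine ⟨g, hg, ?_⟩
      rw [hprod, mk_cons, mk_one_singleton, zpow_add]
      group

lemma exists_path_of_isReduced (h : FreeGroup.IsReduced ((0, e) :: M ++ [(0, e')])) :
    ∃ g, IsPath e g e' ∧ pathProd g = gapStart e * mk M * gapEnd e' := by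
  obtain ⟨hhead, hM⟩ := List.isChain_cons.1 h
  simpa using exists_path_of_isReduced_append 0 hM fun p hp =>
    ⟨fun hp0 hne => (hne (hhead p hp hp0.symm)).elim, fun _ => by simp⟩

lemma exists_mk_eq_zpow_gb (hM : ∀ p ∈ M, p.1 = 1) : ∃ k : ℤ, mk M = gb ^ k := by
  induction M with
  | nil => exact ⟨0, rfl⟩
  | cons p M ih =>
    obtain ⟨h1, hM⟩ := List.forall_mem_cons.1 hM
    obtain ⟨k, hk⟩ := ih hM
    refine ⟨(if p.2 then 1 else -1) + k, ?_⟩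
    rw [mk_cons, zpow_add, ← hk, ← mk_one_singleton, ← h1]

lemma isConj_zpow_gb_or_exists_closed_path (w : F) :
    (∃ k : ℤ, IsConj (gb ^ k) w) ∨ ∃ e g, IsPath e g e ∧ IsConj (pathProd g) w := by
  obtain ⟨C, hC, hCw⟩ := exists_isCyclicallyReduced_isConj_mk w
  by_cases hb : ∀ p ∈ C, p.1 = 1
  · obtain ⟨k, hk⟩ := exists_mk_eq_zpow_gb hb
    exact .inl ⟨k, hk ▸ hCw⟩
  push Not at hb
  obtain ⟨⟨i, e⟩, hmem, hi⟩ := hb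
  obtain rfl : i = 0 := by fin_cases i <;> simp_all
  obtain ⟨s, t, rfl⟩ := List.append_of_mem hmem
  have hred : FreeGroup.IsReduced ((0, e) :: (t ++ s) ++ [(0, e)]) :=
    (isCyclicallyReduced_iff_append_self.1 hC).infix ⟨s, t, by simp⟩
  obtain ⟨g, hg, hprod⟩ := exists_path_of_isReduced hred
  refine .inr ⟨e, g, hg, .trans ?_ hCw⟩
  have conj₁ : IsConj (pathProd g) (mk ((0, e) :: t ++ s)) := isConj_iff.2 ⟨gapEnd e, by
    rw [List.cons_append, mk_cons, hprod, ← gapEnd_mul_gapStart]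
    group⟩
  refine conj₁.trans (isConj_iff.2 ⟨mk s, ?_⟩)
  rw [← mul_mk, ← mul_mk]
  group

end Reading

section PositiveRuns

variable {n : ℕ} {x y u w : F} {c : List (ℕ × ℕ)} {g : List Gap}

/-- Up to conjugation, `x` is a product `a b ^ k₁ ⋯ a b ^ kᵣ * y` without cancellation, where the
exponents `kᵢ ≥ 0` sum up to more than `n` and `y` starts, and is cyclically followed by, a letter
`a`. -/
def HasPositiveRun (n : ℕ) (x : F) : Prop :=
  ∃ (p : List ℕ) (q : List Gap), n < p.sum ∧ IsPath true q true ∧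
    IsConj (pathProd (p.map Gap.pos ++ q)) x

lemma isPath_map_pos (p : List ℕ) : IsPath true (p.map Gap.pos) true := by
  induction p with
  | nil => rfl
  | cons k p ih => exact ⟨rfl, ih⟩

lemma HasPositiveRun.of_isConj (hx : HasPositiveRun n x) (h : IsConj x y) : HasPositiveRun n y :=
  let ⟨p, q, hp, hq, hpq⟩ := hx
  ⟨p, q, hp, hq, hpq.trans h⟩

lemma HasPositiveRun.lt_cyclen (h : HasPositiveRun n x) : n < cyclen x := by
  obtain ⟨p, q, hp, hq, hpq⟩ := h
  have hclosed : IsPath true (p.map Gap.pos ++ q) true :=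
    isPath_append_iff.2 ⟨true, isPath_map_pos p, hq⟩
  have two_mul_sum_le : 2 * p.sum ≤ 2 * cyclen x :=
    calc 2 * p.sum = (p.map fun k => 2 * k).sum := by
          simpa using (List.sum_map_mul_left p id 2).symm
      _ ≤ (p.map fun k => (Gap.pos k).τWord.length).sum :=
        List.sum_le_sum fun k _ => by rw [Gap.length_τWord_pos]; lia
      _ ≤ cyclen (τ (pathProd (p.map Gap.pos ++ q))) := by
        rw [hclosed.cyclen_τ_pathProd]
        simp [Function.comp_def]
      _ ≤ 2 * cyclen (pathProd (p.map Gap.pos ++ q)) := cyclen_τ_le _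
      _ = 2 * cyclen x := by rw [cyclen_eq_of_isConj hpq]
  lia

lemma HasPositiveRun.map_σ (h : HasPositiveRun n x) : HasPositiveRun (n + 1) (σ x) := by
  obtain ⟨p, q, hp, hq, hpq⟩ := h
  refine ⟨p.map (· + 1), q.map Gap.shift, ?_, hq.map_shift, ?_⟩
  · have : 0 < p.length := List.length_pos_iff.2 (by rintro rfl; simp at hp)
    simp only [List.sum_map_add, List.map_id_fun', id_eq, List.map_const', List.sum_replicate,
      smul_eq_mul, mul_one]
    lia
  · convert isConj_map σ hpq
    simp [map_pathProd Gap.σ_val, Function.comp_def, Gap.shift_pos]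

lemma τ_pathProd_map_pos {p : List ℕ} (hp : p ≠ []) :
    ∃ p' : List ℕ, p'.sum = p.sum ∧
      τ (pathProd (p.map Gap.pos)) = pathProd (p'.map Gap.pos) * ga := by
  have τ_val_pos (k : ℕ) :
      τ (Gap.pos k).val = pathProd ((List.replicate k 1).map Gap.pos) * ga := by
    simp [Gap.val_pos, pathProd, mul_pow_mul]
  induction p with
  | nil => contradiction
  | cons k p ih =>
    obtain rfl | hp := eq_or_ne p []
    · exact ⟨List.replicate k 1, by simp, by simpa using τ_val_pos k⟩
    · obtain ⟨p', hsum, hprod⟩ := ih hp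
      refine ⟨List.replicate k 1 ++ 0 :: p', by simp [hsum], ?_⟩
      simp only [List.map_cons, pathProd_cons, map_mul, τ_val_pos, hprod, List.map_append,
        pathProd_append]
      simp [Gap.val_pos, mul_assoc]

lemma IsPath.exists_eq_ga_mul_τ (h : IsPath true g true) :
    ∃ g', IsPath true g' true ∧ pathProd g' = ga * τ (pathProd g) := by
  have hred : FreeGroup.IsReduced ((0, true) :: g.flatMap Gap.τWord ++ [(0, true)]) := by
    have hpath : IsPath true (Gap.pos 0 :: g ++ [Gap.pos 0]) true :=
      isPath_append_iff.2 ⟨true, ⟨rfl, h⟩, rfl, rfl⟩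
    simpa [Gap.τWord, Gap.pos] using hpath.isReduced_flatMap_τWord
  obtain ⟨g', hg', hprod⟩ := exists_path_of_isReduced hred
  exact ⟨g', hg', by simpa [gapStart, gapEnd, τ_pathProd] using hprod⟩

lemma HasPositiveRun.map_τ (h : HasPositiveRun n x) : HasPositiveRun n (τ x) := by
  obtain ⟨p, q, hp, hq, hpq⟩ := h
  obtain ⟨p', hsum, hp'⟩ := τ_pathProd_map_pos (p := p) (by rintro rfl; simp at hp)
  obtain ⟨q', hq', hprod⟩ := hq.exists_eq_ga_mul_τ
  refine ⟨p', q', hsum ▸ hp, hq', ?_⟩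
  convert isConj_map τ hpq using 1
  simp only [pathProd_append, map_mul, hp', hprod, mul_assoc]

lemma HasPositiveRun.of_θ_τ_pow {m : ℕ} (h : HasPositiveRun n (θ ((τ ^ m) w))) :
    HasPositiveRun n (θ w) := by
  induction m with
  | zero => exact h
  | succ m ih =>
    rw [pow_succ', MulAut.mul_apply] at h
    refine ih (h.map_τ.of_isConj ?_)
    rw [τ_θ_τ]
    exact isConj_iff.2 ⟨ga, by group⟩

lemma HasPositiveRun.of_θ_σ_pow {l : ℕ} (h : HasPositiveRun n (θ ((σ ^ l) w))) :
    HasPositiveRun (n + l) (θ w) := by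
  induction l generalizing n with
  | zero => exact h
  | succ l ih =>
    rw [pow_succ', MulAut.mul_apply] at h
    rw [← Nat.succ_add_eq_add_succ]
    exact ih (σ_θ_σ ((σ ^ l) w) ▸ h.map_σ)

lemma HasPositiveRun.of_θ_chainC1 (h : HasPositiveRun n (θ (chainC1 c u))) :
    HasPositiveRun (n + sigmaCount c) (θ u) := by
  induction c generalizing n with
  | nil => exact h
  | cons p c ih =>
    simp only [chainC1, List.map_cons, List.prod_cons, MulAut.mul_apply] at h
    simpa [sigmaCount, add_assoc] using ih h.of_θ_τ_pow.of_θ_σ_pow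

lemma not_hasPositiveRun_θ_chainC1 (hc : cyclen u ≤ sigmaCount c) :
    ¬ HasPositiveRun 0 (θ (chainC1 c u)) := fun h => by
  have := h.of_θ_chainC1.lt_cyclen.trans_le (cyclen_θ_le u)
  lia

lemma IsPath.hasPositiveRun_θ {e : Bool} {x : Gap} (hg : IsPath e g e) (hx : x ∈ g)
    (hl : x.left = true) (hr : x.right = true) (hneg : x.exp < 0) :
    HasPositiveRun 0 (θ (pathProd g)) := by
  obtain ⟨s, t, rfl⟩ := List.append_of_mem hx
  obtain ⟨c, hs, hxl, ht⟩ := isPath_append_iff.1 hg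
  obtain rfl : c = true := hxl.symm.trans hl
  rw [hr] at ht
  refine ⟨[x.exp.natAbs], (t ++ s).map Gap.neg, by simpa using hneg.ne,
    (isPath_append_iff.2 ⟨e, ht, hs⟩).map_neg, ?_⟩
  have neg_eq_pos : x.neg = Gap.pos x.exp.natAbs := by
    ext
    exacts [hl, by simp [Gap.neg, Gap.pos, abs_of_neg hneg], hr]
  rw [List.map_singleton, ← neg_eq_pos, List.singleton_append, ← List.map_cons,
    ← map_pathProd Gap.θ_val]
  refine isConj_map θ (isConj_iff.2 ⟨pathProd s, ?_⟩)
  simp [mul_assoc]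

end PositiveRuns

section Chains

variable {u : F} {c : List (ℕ × ℕ)} {g : List Gap} {e : Bool}

lemma IsPath.exp_nonneg_of_isConj_chainC1 (hc : cyclen u ≤ sigmaCount c) (hg : IsPath e g e)
    (hgu : IsConj (pathProd g) (chainC1 c u)) {x : Gap} (hx : x ∈ g)
    (hl : x.left = true) (hr : x.right = true) : 0 ≤ x.exp := by
  by_contra! hneg
  exact not_hasPositiveRun_θ_chainC1 hc
    ((hg.hasPositiveRun_θ hx hl hr hneg).of_isConj (isConj_map θ hgu))

lemma IsPath.isTame_of_isConj_chainC1 (hc : cyclen u ≤ sigmaCount c) (hg : IsPath e g e)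
    (hgu : IsConj (pathProd g) (chainC1 c u)) {x : Gap} (hx : x ∈ g) : x.IsTame := by
  refine ⟨hg.exp_nonneg_of_isConj_chainC1 hc hgu hx, fun hl hr => ?_⟩
  have hginv : IsConj (pathProd (g.map Gap.inv).reverse) (chainC1 c u⁻¹) := by
    obtain ⟨d, hd⟩ := isConj_iff.1 hgu
    exact isConj_iff.2 ⟨d, by rw [pathProd_reverse_map_inv, map_inv, ← hd]; group⟩
  have := hg.reverse_map_inv.exp_nonneg_of_isConj_chainC1 ((cyclen_inv_le u).trans hc) hginv
    (x := x.inv) (by simpa using ⟨x, hx, rfl⟩) (by simp [Gap.inv, hr]) (by simp [Gap.inv, hl])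
  simpa [Gap.inv] using this

lemma isConj_σ_chainC1 (hc : cyclen u ≤ sigmaCount c)
    (h : cyclen (τ (σ (chainC1 c u))) = cyclen (σ (chainC1 c u))) :
    IsConj (σ (chainC1 c u)) (chainC1 c u) := by
  obtain ⟨k, hk⟩ | ⟨e, g, hg, hgu⟩ := isConj_zpow_gb_or_exists_closed_path (chainC1 c u)
  · have hσk := isConj_map σ hk
    rw [map_zpow, σ_gb] at hσk
    exact hσk.symm.trans hk
  · have hσg := isConj_map σ hgu
    rw [map_pathProd Gap.σ_val] at hσg
    rw [← cyclen_eq_of_isConj (isConj_map τ hσg), ← cyclen_eq_of_isConj hσg] at h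
    rw [hg.map_shift_eq_self (fun _ => hg.isTame_of_isConj_chainC1 hc hgu) h] at hσg
    exact hσg.symm.trans hgu

end Chains

/-- Lemma 4.3.5. -/
theorem stmt7 (u : F) (c₁ : List (ℕ × ℕ)) (hne : c₁ ≠ [])
    (hσ : cyclen u + 1 ≤ sigmaCount c₁)
    (h : cyclen (τ ((σ * chainC1 c₁) u)) = cyclen ((σ * chainC1 c₁) u)) :
    ∀ i : ℕ, cyclen ((σ ^ (i + 1)) (chainC1 c₁ u)) = cyclen ((σ ^ i) (chainC1 c₁ u)) := by
  intro i
  rw [pow_succ, MulAut.mul_apply]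
  exact cyclen_eq_of_isConj (isConj_map (σ ^ i) (isConj_σ_chainC1 (by lia) h))
end
end

section
/- Let u, v ∈ F₂ with ‖u‖ ≥ ‖v‖, let ψ be a chain of type (C1) with |ψ| ≥ 2‖u‖+3, and put k = ‖u‖+1. Suppose that for every chain ψ' of type (C1) with |ψ'| < |ψ| one has: ‖σ^{k+1}ψ'(u)‖ = ‖σ^{k}ψ'(u)‖ if and only if ‖σ^{k+1}ψ'(v)‖ = ‖σ^{k}ψ'(v)‖, and ‖τ^{k+1}ψ'(u)‖ = ‖τ^{k}ψ'(u)‖ if and only if ‖τ^{k+1}ψ'(v)‖ = ‖τ^{k}ψ'(v)‖. Then also: (i) ‖σ^{k+1}ψ(u)‖ = ‖σ^{k}ψ(u)‖ if and only if ‖σ^{k+1}ψ(v)‖ = ‖σ^{k}ψ(v)‖, and (ii) ‖τ^{k+1}ψ(u)‖ = ‖τ^{k}ψ(u)‖ if and only if ‖τ^{k+1}ψ(v)‖ = ‖τ^{k}ψ(v)‖. -/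
noncomputable section

/-!
Call `w` `σ`-stable if it is conjugate into the subgroup `⟨b, aba⁻¹⟩` of fixed points of `σ`, and
`τ`-stable if the same holds with `a` and `b` exchanged. Split a cyclic word into syllables
`b ^ j * a ^ (±1)`: the power `σ ^ n` only shifts exponents `j`, so for large `n` the cyclic length
is affine in `n`, and it is constant if and only if the signs of the letters `a` alternate, which is
`σ`-stability. The exponents that would delay this growth beyond `n = k` sit in long words in `a`
and `b⁻¹`; such words grow under `σ⁻¹` and `τ⁻¹`, so they do not occur in `φ u` for a chain `φ` and
`‖u‖ ≤ k + 1`. Hence the two length equalities say that `φ u` is `σ`-stable, respectively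
`τ`-stable.

`σ`-stability is invariant under `σ`. If `σ (φ u)` is `τ`-stable, then the growth of words in `a`
and `b⁻¹` along the chain, which is long compared with `‖u‖`, forces `u` to be conjugate to a power
of `[a, b]`. Chains fix `[a, b]`, and its conjugated powers are exactly the elements that are both
`σ`- and `τ`-stable, so this property is visible on the chain `φ` and passes from `u` to `v`.
-/

namespace RankTwo

section Words

open FreeGroup

variable {α : Type*} {l X Y : List (α × Bool)}

theorem isReduced_cons_iff {x : α × Bool} :
    IsReduced (x :: l) ↔ (∀ y ∈ l.head?, x.1 = y.1 → x.2 = y.2) ∧ IsReduced l :=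
  List.isChain_cons

theorem isReduced_replicate_append {c : α × Bool} (h : ∀ x ∈ l.head?, c.1 ≠ x.1)
    (n : ℕ) : IsReduced (List.replicate n c ++ l) ↔ IsReduced l := by
  induction n with
  | zero => rfl
  | succ n ih =>
    rw [List.replicate_succ, List.cons_append, isReduced_cons_iff, ih, and_iff_right]
    cases n with
    | zero => exact fun x hx hc => absurd hc (h x hx)
    | succ n => simp [List.replicate_succ]

theorem isCyclicallyReduced_iff_append_self :
    IsCyclicallyReduced l ↔ IsReduced (l ++ l) := by
  rw [isCyclicallyReduced_iff, FreeGroup.IsReduced, FreeGroup.IsReduced, List.isChain_append]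
  tauto

theorem isCyclicallyReduced_iff_cons {c : α × Bool} (hc : l.getLast? = some c) :
    IsCyclicallyReduced l ↔ IsReduced (c :: l) := by
  simp [isCyclicallyReduced_iff, isReduced_cons_iff, hc, and_comm]

theorem isCyclicallyReduced_append_self (h : IsCyclicallyReduced l) :
    IsCyclicallyReduced (l ++ l) := by
  simpa [List.replicate] using h.flatten_replicate 2

theorem isCyclicallyReduced_append_comm (h : IsCyclicallyReduced (X ++ Y)) :
    IsCyclicallyReduced (Y ++ X) := by
  rw [isCyclicallyReduced_iff_append_self]
  exact (h.flatten_replicate 3).isReduced.infix ⟨X, Y, by simp [List.replicate]⟩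

theorem isReduced_map_prodMap {β : Type*} {f : α → β} {g : Bool → Bool}
    (hf : Function.Injective f) (h : IsReduced l) :
    IsReduced (l.map (Prod.map f g)) := by
  rw [FreeGroup.IsReduced, List.isChain_map]
  exact h.imp fun x y hxy hf' => congrArg g (hxy (hf hf'))

theorem isReduced_reverse (h : IsReduced l) : IsReduced l.reverse := by
  rw [FreeGroup.IsReduced, List.isChain_reverse]
  exact h.imp fun x y hxy hyx => (hxy hyx.symm).symm

theorem isCyclicallyReduced_invRev (h : IsCyclicallyReduced l) :
    IsCyclicallyReduced (invRev l) := by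
  rw [isCyclicallyReduced_iff_append_self] at h ⊢
  rw [← invRev_append]
  exact isReduced_reverse (isReduced_map_prodMap Function.injective_id h)

theorem isConj_mul_comm {G : Type*} [Group G] (x y : G) : IsConj (x * y) (y * x) :=
  isConj_iff.2 ⟨y, by group⟩

theorem isConj_inv {G : Type*} [Group G] {x y : G} (h : IsConj x y) : IsConj x⁻¹ y⁻¹ := by
  obtain ⟨c, rfl⟩ := isConj_iff.1 h
  exact isConj_iff.2 ⟨c, by group⟩

theorem isConj_zpow {G : Type*} [Group G] {x y : G} (h : IsConj x y) (m : ℤ) :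
    IsConj (x ^ m) (y ^ m) := by
  obtain ⟨c, rfl⟩ := isConj_iff.1 h
  exact isConj_iff.2 ⟨c, (conj_zpow ..).symm⟩

theorem isConj_apply {G : Type*} [Group G] (φ : MulAut G) {x y : G} (h : IsConj x y) :
    IsConj (φ x) (φ y) :=
  φ.toMonoidHom.map_isConj h

theorem mk_cons (x : α × Bool) (t : List (α × Bool)) : mk (x :: t) = mk [x] * mk t := by
  rw [mul_mk, List.singleton_append]

theorem isConj_mk_append_comm (X Y : List (α × Bool)) : IsConj (mk (X ++ Y)) (mk (Y ++ X)) := by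
  simpa only [mul_mk] using isConj_mul_comm (mk X) (mk Y)

theorem exists_isCyclicallyReduced_isConj (w : FreeGroup α) :
    ∃ l, IsCyclicallyReduced l ∧ IsConj w (mk l) := by
  classical
  refine ⟨_, reduceCyclically.isCyclicallyReduced (isReduced_toWord (x := w)), ?_⟩
  set c : FreeGroup α := mk (reduceCyclically.conjugator w.toWord) with hc
  refine (isConj_iff.2 ⟨c, ?_⟩ : IsConj _ w).symm
  rw [hc, inv_mk, mul_mk, mul_mk, reduceCyclically.conj_conjugator_reduceCyclically, mk_toWord]

end Words

section CyclicLength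

variable {x y : F}

theorem exists_len_conj_eq_cyclen (w : F) : ∃ g : F, len (g * w * g⁻¹) = cyclen w :=
  Nat.sInf_mem (s := {n | ∃ g : F, len (g * w * g⁻¹) = n}) ⟨_, 1, rfl⟩

theorem cyclen_le_len_conj (w g : F) : cyclen w ≤ len (g * w * g⁻¹) :=
  Nat.sInf_le ⟨g, rfl⟩

theorem cyclen_le_of_isConj (h : IsConj x y) : cyclen x ≤ cyclen y := by
  obtain ⟨c, rfl⟩ := isConj_iff.1 h
  obtain ⟨g, hg⟩ := exists_len_conj_eq_cyclen (c * x * c⁻¹)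
  rw [← hg]
  simpa [mul_assoc] using cyclen_le_len_conj x (g * c)

theorem cyclen_eq_of_isConj (h : IsConj x y) : cyclen x = cyclen y :=
  le_antisymm (cyclen_le_of_isConj h) (cyclen_le_of_isConj h.symm)

theorem len_pow_le (x : F) (n : ℕ) : len (x ^ n) ≤ n * len x := by
  induction n with
  | zero => simp [len]
  | succ n ih =>
    rw [pow_succ, Nat.succ_mul]
    exact (FreeGroup.norm_mul_le _ _).trans (Nat.add_le_add_right ih _)

theorem exists_len_pow_le (w : F) : ∃ C, ∀ n, len (w ^ n) ≤ n * cyclen w + C := by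
  obtain ⟨g, hg⟩ := exists_len_conj_eq_cyclen w
  refine ⟨2 * len g, fun n => ?_⟩
  have hpow : w ^ n = g⁻¹ * (g * w * g⁻¹) ^ n * g := by rw [conj_pow]; group
  have hinv : len g⁻¹ = len g := FreeGroup.norm_inv_eq
  have h₁ : len (w ^ n) ≤ len (g⁻¹ * (g * w * g⁻¹) ^ n) + len g :=
    hpow ▸ FreeGroup.norm_mul_le _ _
  have h₂ : len (g⁻¹ * (g * w * g⁻¹) ^ n) ≤ len g⁻¹ + len ((g * w * g⁻¹) ^ n) :=
    FreeGroup.norm_mul_le _ _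
  have h₃ := hg ▸ len_pow_le (g * w * g⁻¹) n
  omega

theorem len_mk_pow {l : List (Fin 2 × Bool)} (h : FreeGroup.IsCyclicallyReduced l) (n : ℕ) :
    len (FreeGroup.mk l ^ n) = n * l.length := by
  rw [len, FreeGroup.toWord_pow, FreeGroup.toWord_mk, h.isReduced.reduce_eq,
    (h.flatten_replicate n).isReduced.reduce_eq]
  simp

/- The powers of a cyclically reduced word grow without cancellation, whereas `len (w ^ n)` is at
most `n * cyclen w` up to a bounded error. -/
theorem cyclen_mk {l : List (Fin 2 × Bool)} (h : FreeGroup.IsCyclicallyReduced l) :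
    cyclen (FreeGroup.mk l) = l.length := by
  refine le_antisymm ?_ ?_
  · simpa using (cyclen_le_len_conj (FreeGroup.mk l) 1).trans_eq
      (by simpa using len_mk_pow h 1)
  · obtain ⟨C, hC⟩ := exists_len_pow_le (FreeGroup.mk l)
    have hgrow := hC (C + 1)
    rw [len_mk_pow h] at hgrow
    nlinarith

theorem cyclen_inv (w : F) : cyclen w⁻¹ = cyclen w := by
  have key (x : F) : cyclen x⁻¹ ≤ cyclen x := by
    obtain ⟨g, hg⟩ := exists_len_conj_eq_cyclen x
    calc cyclen x⁻¹ ≤ len (g * x⁻¹ * g⁻¹) := cyclen_le_len_conj _ _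
      _ = len (g * x * g⁻¹)⁻¹ := by congr 1; group
      _ = cyclen x := FreeGroup.norm_inv_eq.trans hg
  exact le_antisymm (key w) (by simpa using key w⁻¹)

theorem cyclen_pow_le (w : F) (n : ℕ) : cyclen (w ^ n) ≤ n * cyclen w := by
  obtain ⟨g, hg⟩ := exists_len_conj_eq_cyclen w
  calc cyclen (w ^ n) ≤ len (g * w ^ n * g⁻¹) := cyclen_le_len_conj _ _
    _ = len ((g * w * g⁻¹) ^ n) := by rw [conj_pow]
    _ ≤ n * cyclen w := hg ▸ len_pow_le _ n

end CyclicLength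

section Homomorphisms

variable {G : Type*} [Group G]

@[simp] theorem lift_ga (x y : G) : FreeGroup.lift ![x, y] ga = x := by simp [ga]

@[simp] theorem lift_gb (x y : G) : FreeGroup.lift ![x, y] gb = y := by simp [gb]

theorem hom_ext {f g : F →* G} (ha : f ga = g ga) (hb : f gb = g gb) : f = g := by
  ext i
  fin_cases i
  exacts [ha, hb]

theorem aut_ext {f g : MulAut F} (ha : f ga = g ga) (hb : f gb = g gb) : f = g :=
  MulEquiv.toMonoidHom_injective (hom_ext ha hb)

@[simp] theorem σ_ga : σ ga = ga * gb := lift_ga (ga * gb) gb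

@[simp] theorem σ_gb : σ gb = gb := lift_gb (ga * gb) gb

@[simp] theorem τ_ga : τ ga = ga := lift_ga ga (gb * ga)

@[simp] theorem τ_gb : τ gb = gb * ga := lift_gb ga (gb * ga)

theorem σ_inv_ga : σ⁻¹ ga = ga * gb⁻¹ := lift_ga (ga * gb⁻¹) gb

theorem σ_inv_gb : σ⁻¹ gb = gb := lift_gb (ga * gb⁻¹) gb

end Homomorphisms

/-- The automorphism exchanging `a` and `b`. It conjugates `σ` to `τ`, so every statement about
`σ` yields one about `τ`. -/
def swap : MulAut F := FreeGroup.freeGroupCongr (Equiv.swap 0 1)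

section Swap

@[simp] theorem swap_ga : swap ga = gb := rfl

@[simp] theorem swap_gb : swap gb = ga := rfl

theorem swap_mk (l : List (Fin 2 × Bool)) :
    swap (FreeGroup.mk l) = FreeGroup.mk (l.map (Prod.map (Equiv.swap 0 1) id)) := rfl

@[simp] theorem swap_swap (w : F) : swap (swap w) = w :=
  DFunLike.congr_fun (aut_ext (f := swap * swap) (g := 1) rfl rfl) w

@[simp] theorem swap_inv : swap⁻¹ = swap :=
  inv_eq_of_mul_eq_one_left (MulEquiv.ext swap_swap)

theorem swap_mul_σ_mul_swap : swap * σ * swap⁻¹ = τ :=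
  aut_ext (by simp [MulAut.mul_apply]) (by simp [MulAut.mul_apply])

theorem swap_σ_pow (n : ℕ) (w : F) : swap ((σ ^ n) w) = (τ ^ n) (swap w) := by
  rw [← swap_mul_σ_mul_swap, conj_pow]
  simp [MulAut.mul_apply]

theorem swap_τ_pow (n : ℕ) (w : F) : swap ((τ ^ n) w) = (σ ^ n) (swap w) := by
  rw [← swap_swap ((σ ^ n) (swap w)), swap_σ_pow, swap_swap]

theorem swap_σ (w : F) : swap (σ w) = τ (swap w) := by simpa using swap_σ_pow 1 w

theorem swap_τ (w : F) : swap (τ w) = σ (swap w) := by simpa using swap_τ_pow 1 w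

theorem cyclen_swap (w : F) : cyclen (swap w) = cyclen w := by
  obtain ⟨l, hl, hw⟩ := exists_isCyclicallyReduced_isConj w
  have hswap : FreeGroup.IsCyclicallyReduced (l.map (Prod.map (Equiv.swap 0 1) id)) := by
    rw [isCyclicallyReduced_iff_append_self] at hl ⊢
    rw [← List.map_append]
    exact isReduced_map_prodMap (Equiv.injective _) hl
  rw [cyclen_eq_of_isConj (isConj_apply swap hw), cyclen_eq_of_isConj hw, cyclen_mk hl]
  exact (cyclen_mk hswap).trans (List.length_map _)

end Swap

/-- `IsChainC1 n φ` says that `φ` is a chain of type (C1) of length `n`, presented letter by letter;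
the empty chain is included. -/
inductive IsChainC1 : ℕ → MulAut F → Prop
  | one : IsChainC1 0 1
  | σ_mul {n : ℕ} {φ : MulAut F} : IsChainC1 n φ → IsChainC1 (n + 1) (σ * φ)
  | τ_mul {n : ℕ} {φ : MulAut F} : IsChainC1 n φ → IsChainC1 (n + 1) (τ * φ)

namespace IsChainC1

variable {n : ℕ} {φ : MulAut F}

theorem σ_pow_mul (h : IsChainC1 n φ) (m : ℕ) : IsChainC1 (n + m) (σ ^ m * φ) := by
  induction m with
  | zero => simpa using h
  | succ m ih => simpa only [pow_succ', mul_assoc] using! ih.σ_mul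

theorem τ_pow_mul (h : IsChainC1 n φ) (m : ℕ) : IsChainC1 (n + m) (τ ^ m * φ) := by
  induction m with
  | zero => simpa using h
  | succ m ih => simpa only [pow_succ', mul_assoc] using! ih.τ_mul

theorem swap_conj (h : IsChainC1 n φ) : IsChainC1 n (swap * φ * swap⁻¹) := by
  induction h with
  | one => simpa only [mul_one, mul_inv_cancel] using one
  | @σ_mul n φ _ ih =>
    have e : swap * (σ * φ) * swap⁻¹ = τ * (swap * φ * swap⁻¹) :=
      MulEquiv.ext fun w => by simp [MulAut.mul_apply, swap_σ]
    exact e ▸ ih.τ_mul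
  | @τ_mul n φ _ ih =>
    have e : swap * (τ * φ) * swap⁻¹ = σ * (swap * φ * swap⁻¹) :=
      MulEquiv.ext fun w => by simp [MulAut.mul_apply, swap_τ]
    exact e ▸ ih.σ_mul

theorem of_chainC1 (c : List (ℕ × ℕ)) : IsChainC1 (chainLen c) (chainC1 c) := by
  induction c with
  | nil => exact one
  | cons p c ih =>
    have e : chainLen (p :: c) = chainLen c + p.1 + p.2 := by
      simp only [chainLen, sigmaCount, tauCount, List.map_cons, List.sum_cons]
      ring
    simpa only [e, chainC1, List.map_cons, List.prod_cons, mul_assoc]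
      using (ih.σ_pow_mul p.1).τ_pow_mul p.2

theorem exists_chainC1 (h : IsChainC1 n φ) :
    ∃ c : List (ℕ × ℕ), c ≠ [] ∧ chainLen c = n ∧ chainC1 c = φ := by
  induction h with
  | one => exact ⟨[(0, 0)], by simp, rfl, by simp [chainC1]⟩
  | σ_mul _ ih =>
    obtain ⟨c, -, rfl, rfl⟩ := ih
    refine ⟨(1, 0) :: c, by simp, ?_, by simp [chainC1]⟩
    simp only [chainLen, sigmaCount, tauCount, List.map_cons, List.sum_cons]
    ring
  | τ_mul _ ih =>
    obtain ⟨c, -, rfl, rfl⟩ := ih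
    refine ⟨(0, 1) :: c, by simp, ?_, by simp [chainC1]⟩
    simp only [chainLen, sigmaCount, tauCount, List.map_cons, List.sum_cons]
    ring

end IsChainC1

section InverseShearWord

/-- The image of a letter under `σ⁻¹`. -/
def σInvLetter (x : Fin 2 × Bool) : List (Fin 2 × Bool) :=
  if x = (0, true) then [(0, true), (1, false)]
  else if x = (0, false) then [(1, true), (0, false)] else [x]

/-- The image of a word under `σ⁻¹`, where the cancellations in the images of `ab` and `b⁻¹a⁻¹` are
carried out. On reduced words no other cancellation occurs. -/
def σInvWord : List (Fin 2 × Bool) → List (Fin 2 × Bool)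
  | [] => []
  | [x] => σInvLetter x
  | x :: y :: t =>
    if x = (0, true) ∧ y = (1, true) then (0, true) :: σInvWord t
    else if x = (1, false) ∧ y = (0, false) then (0, false) :: σInvWord t
    else σInvLetter x ++ σInvWord (y :: t)

variable {l X Y : List (Fin 2 × Bool)}

theorem letter_cases (x : Fin 2 × Bool) :
    x = (0, true) ∨ x = (0, false) ∨ x = (1, true) ∨ x = (1, false) := by
  revert x; decide

theorem mk_a : FreeGroup.mk [(0, true)] = ga := rfl

theorem mk_a_inv : FreeGroup.mk [(0, false)] = ga⁻¹ := rfl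

theorem mk_b : FreeGroup.mk [(1, true)] = gb := rfl

theorem mk_b_inv : FreeGroup.mk [(1, false)] = gb⁻¹ := rfl

theorem mk_σInvLetter (x : Fin 2 × Bool) :
    FreeGroup.mk (σInvLetter x) = σ⁻¹ (FreeGroup.mk [x]) := by
  rcases letter_cases x with rfl | rfl | rfl | rfl
  · rw [mk_a, σ_inv_ga]; rfl
  · rw [mk_a_inv, map_inv, σ_inv_ga, mul_inv_rev, inv_inv]; rfl
  · rw [mk_b, σ_inv_gb]; rfl
  · rw [mk_b_inv, map_inv, σ_inv_gb]; rfl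

theorem mk_σInvWord (l : List (Fin 2 × Bool)) :
    FreeGroup.mk (σInvWord l) = σ⁻¹ (FreeGroup.mk l) := by
  induction l using σInvWord.induct with
  | case1 => exact (map_one _).symm
  | case2 x => exact mk_σInvLetter x
  | case3 x y t h ih =>
    obtain ⟨rfl, rfl⟩ := h
    rw [σInvWord, if_pos ⟨rfl, rfl⟩, mk_cons, ih, mk_cons _ (_ :: _), mk_cons _ t, mk_a, mk_b,
      map_mul, map_mul, σ_inv_ga, σ_inv_gb, mul_assoc, inv_mul_cancel_left]
  | case4 x y t h h' ih =>
    obtain ⟨rfl, rfl⟩ := h'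
    rw [σInvWord, if_neg h, if_pos ⟨rfl, rfl⟩, mk_cons, ih, mk_cons _ (_ :: _), mk_cons _ t,
      mk_a_inv, mk_b_inv, map_mul, map_mul, map_inv, map_inv, σ_inv_ga, σ_inv_gb, mul_inv_rev,
      inv_inv, mul_assoc, inv_mul_cancel_left]
  | case5 x y t h h' ih =>
    rw [σInvWord, if_neg h, if_neg h', ← FreeGroup.mul_mk, ih, mk_σInvLetter, ← map_mul, ← mk_cons]

theorem σInvWord_head {z : Fin 2 × Bool} (hz : z ∈ (σInvWord l).head?) :
    ∃ x ∈ l.head?, x = (0, true) ∧ z = (0, true) ∨ x = (0, false) ∧ z = (1, true) ∨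
      x = (1, true) ∧ z = (1, true) ∨ x = (1, false) ∧ (z = (1, false) ∨ z = (0, false)) := by
  match l with
  | [] => simp [σInvWord] at hz
  | [x] => rcases letter_cases x with rfl | rfl | rfl | rfl <;> grind [σInvWord, σInvLetter]
  | x :: y :: t =>
    rw [σInvWord] at hz
    split_ifs at hz with h h'
    · simp_all
    · simp_all
    · rcases letter_cases x with rfl | rfl | rfl | rfl <;> grind [σInvLetter]

theorem isReduced_σInvLetter (x : Fin 2 × Bool) : FreeGroup.IsReduced (σInvLetter x) := by
  rcases letter_cases x with rfl | rfl | rfl | rfl <;> simp [σInvLetter]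

theorem isReduced_σInvWord (hl : FreeGroup.IsReduced l) : FreeGroup.IsReduced (σInvWord l) := by
  induction l using σInvWord.induct with
  | case1 => exact .nil
  | case2 x => exact isReduced_σInvLetter x
  | case3 x y t h ih =>
    obtain ⟨rfl, rfl⟩ := h
    have hl' := isReduced_cons_iff.1 (isReduced_cons_iff.1 hl).2
    rw [σInvWord, if_pos ⟨rfl, rfl⟩, isReduced_cons_iff]
    refine ⟨fun z hz => ?_, ih hl'.2⟩
    obtain ⟨w, hw, h⟩ := σInvWord_head hz
    have hbw := hl'.1 w hw
    rcases h with ⟨rfl, rfl⟩ | ⟨rfl, rfl⟩ | ⟨rfl, rfl⟩ | ⟨rfl, rfl | rfl⟩ <;> simp at hbw ⊢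
  | case4 x y t h h' ih =>
    obtain ⟨rfl, rfl⟩ := h'
    have hl' := isReduced_cons_iff.1 (isReduced_cons_iff.1 hl).2
    rw [σInvWord, if_neg h, if_pos ⟨rfl, rfl⟩, isReduced_cons_iff]
    refine ⟨fun z hz => ?_, ih hl'.2⟩
    obtain ⟨w, hw, h⟩ := σInvWord_head hz
    have haw := hl'.1 w hw
    rcases h with ⟨rfl, rfl⟩ | ⟨rfl, rfl⟩ | ⟨rfl, rfl⟩ | ⟨rfl, rfl | rfl⟩ <;> simp at haw ⊢
  | case5 x y t h h' ih =>
    have hl' := isReduced_cons_iff.1 hl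
    rw [σInvWord, if_neg h, if_neg h', FreeGroup.IsReduced, List.isChain_append]
    refine ⟨isReduced_σInvLetter x, ih hl'.2, fun d hd z hz => ?_⟩
    obtain ⟨w, hw, hwz⟩ := σInvWord_head hz
    have hxw := hl'.1 w hw
    obtain rfl : y = w := by simpa using hw
    rcases letter_cases x with rfl | rfl | rfl | rfl <;>
      simp only [σInvLetter] at hd <;>
      rcases hwz with ⟨rfl, rfl⟩ | ⟨rfl, rfl⟩ | ⟨rfl, rfl⟩ | ⟨rfl, rfl | rfl⟩ <;>
      simp_all [eq_comm]

theorem σInvWord_cons_of_head (x : Fin 2 × Bool)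
    (hY : ∀ y ∈ Y.head?, y = (0, true) ∨ y = (1, false)) :
    σInvWord (x :: Y) = σInvLetter x ++ σInvWord Y := by
  cases Y with
  | nil => simp [σInvWord]
  | cons y t => rw [σInvWord, if_neg, if_neg] <;> rintro ⟨rfl, rfl⟩ <;> simp at hY

theorem σInvWord_append (hY : ∀ y ∈ Y.head?, y = (0, true) ∨ y = (1, false)) :
    σInvWord (X ++ Y) = σInvWord X ++ σInvWord Y := by
  induction X using σInvWord.induct with
  | case1 => rfl
  | case2 x => exact σInvWord_cons_of_head x hY
  | case3 x y t h ih => simp [σInvWord, h, ih]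
  | case4 x y t _ h' ih => simp [σInvWord, h', ih]
  | case5 x y t h h' ih =>
    simp only [List.cons_append] at ih ⊢
    rw [σInvWord, if_neg h, if_neg h', σInvWord, if_neg h, if_neg h', ih, List.append_assoc]

theorem isCyclicallyReduced_σInvWord (hl : FreeGroup.IsCyclicallyReduced l)
    (hhead : ∀ y ∈ l.head?, y = (0, true) ∨ y = (1, false)) :
    FreeGroup.IsCyclicallyReduced (σInvWord l) := by
  rw [isCyclicallyReduced_iff_append_self] at hl ⊢
  exact σInvWord_append hhead ▸ isReduced_σInvWord hl

end InverseShearWord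

/-- A word in the letters `a` and `b⁻¹`; these are the words in which `σ⁻¹` and `τ⁻¹` produce no
cancellation. -/
def IsPosWord (P : List (Fin 2 × Bool)) : Prop := ∀ x ∈ P, x = (0, true) ∨ x = (1, false)

namespace IsPosWord

variable {P : List (Fin 2 × Bool)}

theorem head (hP : IsPosWord P) (hne : P ≠ []) (Y : List (Fin 2 × Bool)) :
    ∀ x ∈ (P ++ Y).head?, x = (0, true) ∨ x = (1, false) := by
  obtain ⟨x, P, rfl⟩ := List.exists_cons_of_ne_nil hne
  simpa using hP x (by simp)

theorem length (hP : IsPosWord P) : P.length = P.count (0, true) + P.count (1, false) := by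
  induction P with
  | nil => rfl
  | cons x P ih =>
    have := ih fun y hy => hP y (List.mem_cons_of_mem _ hy)
    rcases hP x List.mem_cons_self with rfl | rfl <;> simp [this] <;> omega

/- Only the last letter of `P` can be affected by a cancellation with `Y`, which costs at most one
letter `b⁻¹`. -/
theorem exists_σInvWord_append (hP : IsPosWord P) (Y : List (Fin 2 × Bool)) :
    ∃ P' R, σInvWord (P ++ Y) = P' ++ R ∧ IsPosWord P' ∧
      P.count (0, true) ≤ P'.count (0, true) ∧
      P.count (0, true) + P.count (1, false) ≤ P'.count (1, false) + 1 := by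
  induction P with
  | nil => exact ⟨[], σInvWord Y, rfl, by simp [IsPosWord], by simp, by simp⟩
  | cons x P ih =>
    obtain ⟨P', R, hS, hP', ha, hb⟩ := ih fun y hy => hP y (List.mem_cons_of_mem _ hy)
    have hx := hP x List.mem_cons_self
    rcases eq_or_ne P [] with rfl | hne
    · rcases hx with rfl | rfl
      · refine ⟨[(0, true)], (σInvWord ((0, true) :: Y)).tail, ?_, by simp [IsPosWord], by simp⟩
        cases Y with
        | nil => rfl
        | cons y Y => by_cases hy : y = (1, true) <;> simp [σInvWord, σInvLetter, hy]
      · exact ⟨[], _, rfl, by simp [IsPosWord], by simp⟩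
    · have hS' : σInvWord (x :: (P ++ Y)) = (σInvLetter x ++ P') ++ R := by
        rw [σInvWord_cons_of_head x (head (fun y hy => hP y (List.mem_cons_of_mem _ hy)) hne Y),
          hS, List.append_assoc]
      refine ⟨_, R, hS', fun z hz => ?_, ?_⟩
      · rcases List.mem_append.1 hz with hz | hz
        · rcases hx with rfl | rfl <;> simp [σInvLetter] at hz <;> tauto
        · exact hP' z hz
      · rcases hx with rfl | rfl <;> simp [σInvLetter] <;> omega

end IsPosWord

/-- `HasBlock p q g`: some cyclically reduced conjugate of `g` begins with a word in `a` and `b⁻¹`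
that contains more than `p` letters `a` and more than `q` letters `b⁻¹`. Blocks grow under `σ⁻¹`
and `τ⁻¹`, so an image under a long chain of an element of small cyclic length has none. -/
def HasBlock (p q : ℕ) (g : F) : Prop :=
  ∃ P Y, IsPosWord P ∧ p < P.count (0, true) ∧ q < P.count (1, false) ∧
    FreeGroup.IsCyclicallyReduced (P ++ Y) ∧ IsConj g (FreeGroup.mk (P ++ Y))

namespace HasBlock

variable {p q : ℕ} {g h : F}

theorem of_isConj (hb : HasBlock p q h) (hgh : IsConj g h) : HasBlock p q g := by
  obtain ⟨P, Y, hP, ha, hb, hred, hh⟩ := hb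
  exact ⟨P, Y, hP, ha, hb, hred, hgh.trans hh⟩

theorem mk_append {P : List (Fin 2 × Bool)} (hP : IsPosWord P) (ha : p < P.count (0, true))
    (hb : q < P.count (1, false)) {X Y : List (Fin 2 × Bool)}
    (hred : FreeGroup.IsCyclicallyReduced (X ++ (P ++ Y))) :
    HasBlock p q (FreeGroup.mk (X ++ (P ++ Y))) := by
  refine ⟨P, Y ++ X, hP, ha, hb, ?_, ?_⟩ <;> rw [← List.append_assoc P]
  · exact isCyclicallyReduced_append_comm hred
  · exact isConj_mk_append_comm X (P ++ Y)

theorem le_cyclen (hg : HasBlock p q g) : p + q + 2 ≤ cyclen g := by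
  obtain ⟨P, Y, hP, ha, hb, hred, hg⟩ := hg
  rw [cyclen_eq_of_isConj hg, cyclen_mk hred, List.length_append, hP.length]
  omega

theorem σ_inv (hg : HasBlock p q g) : HasBlock p (p + q) (σ⁻¹ g) := by
  obtain ⟨P, Y, hP, ha, hb, hred, hg⟩ := hg
  obtain ⟨P', R, hPR, hP', ha', hb'⟩ := hP.exists_σInvWord_append Y
  have hne : P ≠ [] := by rintro rfl; simp at ha
  refine ⟨P', R, hP', by omega, by omega, ?_, ?_⟩
  · exact hPR ▸ isCyclicallyReduced_σInvWord hred (hP.head hne Y)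
  · exact hPR ▸ (mk_σInvWord (P ++ Y)).symm ▸ isConj_apply σ⁻¹ hg

theorem swap_inv (hg : HasBlock p q g) : HasBlock q p (swap g)⁻¹ := by
  obtain ⟨P, Y, hP, ha, hb, hred, hg⟩ := hg
  set f : Fin 2 × Bool → Fin 2 × Bool := Prod.map (Equiv.swap 0 1) not with hf
  have hcount (x : Fin 2 × Bool) : (P.map f).reverse.count (f x) = P.count x := by
    rw [List.count_reverse, List.count_map_of_injective _ _ (by rw [hf]; decide)]
  have hinv : (swap (FreeGroup.mk (P ++ Y)))⁻¹ =
      FreeGroup.mk ((Y.map f).reverse ++ ((P.map f).reverse ++ [])) := by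
    rw [swap_mk, FreeGroup.inv_mk, FreeGroup.invRev, List.map_map, List.append_nil,
      ← List.reverse_append, ← List.map_append]
    rfl
  refine of_isConj (hinv ▸ mk_append ?_ ?_ ?_ ?_) (isConj_inv (isConj_apply swap hg))
  · intro x hx
    obtain ⟨y, hy, rfl⟩ := List.mem_map.1 (List.mem_reverse.1 hx)
    rcases hP y hy with rfl | rfl
    · exact Or.inr rfl
    · exact Or.inl rfl
  · exact (hcount (1, false)).symm ▸ hb
  · exact (hcount (0, true)).symm ▸ ha
  · rw [isCyclicallyReduced_iff_append_self] at hred ⊢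
    have := isReduced_reverse
      (isReduced_map_prodMap (g := not) (Equiv.injective (Equiv.swap (0 : Fin 2) 1)) hred)
    simpa only [List.append_nil, List.map_append, List.reverse_append] using this

theorem τ_inv (hg : HasBlock p q g) : HasBlock (p + q) q (τ⁻¹ g) := by
  have e : (swap (σ⁻¹ (swap g)⁻¹))⁻¹ = τ⁻¹ g := by
    rw [← swap_mul_σ_mul_swap]
    simp [MulAut.mul_apply, mul_assoc]
  exact e ▸ add_comm q p ▸ hg.swap_inv.σ_inv.swap_inv

theorem le_cyclen_of_isChainC1 {L : ℕ} {φ : MulAut F} (hφ : IsChainC1 L φ)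
    (hg : HasBlock p q (φ g)) : p + q + 2 + min p q * L ≤ cyclen g := by
  induction hφ generalizing p q with
  | one => simpa using hg.le_cyclen
  | @σ_mul n φ _ ih =>
    have hle := ih (by simpa [MulAut.mul_apply] using hg.σ_inv)
    rw [min_eq_left (Nat.le_add_right p q)] at hle
    nlinarith [min_le_left p q]
  | @τ_mul n φ _ ih =>
    have hle := ih (by simpa [MulAut.mul_apply] using hg.τ_inv)
    rw [min_eq_right (Nat.le_add_left q p)] at hle
    nlinarith [min_le_right p q]

end HasBlock

/-- The endomorphism `a ↦ b`, `b ↦ aba⁻¹`, whose image consists of fixed points of `σ`. -/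
def σFix : F →* F := FreeGroup.lift ![gb, ga * gb * ga⁻¹]

/-- `w` is conjugate into the subgroup `⟨b, aba⁻¹⟩` of fixed points of `σ`. This is the algebraic
counterpart of the stabilization of the cyclic length along the powers of `σ`. -/
def IsσStable (w : F) : Prop := ∃ x, IsConj w (σFix x)

/-- `w` is conjugate into the subgroup `⟨a, bab⁻¹⟩` of fixed points of `τ`. -/
def IsτStable (w : F) : Prop := IsσStable (swap w)

section Stability

variable {w w' : F}

theorem IsσStable.of_isConj (h : IsσStable w') (hw : IsConj w w') : IsσStable w := by
  obtain ⟨x, hx⟩ := h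
  exact ⟨x, hw.trans hx⟩

theorem IsτStable.of_isConj (h : IsτStable w') (hw : IsConj w w') : IsτStable w :=
  IsσStable.of_isConj h (isConj_apply swap hw)

theorem isτStable_swap : IsτStable (swap w) ↔ IsσStable w := by rw [IsτStable, swap_swap]

theorem σ_σFix (x : F) : σ (σFix x) = σFix x :=
  DFunLike.congr_fun (hom_ext (f := σ.toMonoidHom.comp σFix) (g := σFix)
    (by simp [σFix]) (by simp [σFix])) x

theorem IsσStable.isConj_σ (h : IsσStable w) : IsConj (σ w) w := by
  obtain ⟨x, hx⟩ := h
  exact (σ_σFix x ▸ isConj_apply σ hx).trans hx.symm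

theorem IsσStable.isConj_σ_pow (h : IsσStable w) (n : ℕ) : IsConj ((σ ^ n) w) w := by
  induction n with
  | zero => exact .refl w
  | succ n ih =>
    rw [pow_succ', MulAut.mul_apply]
    exact (isConj_apply σ ih).trans h.isConj_σ

theorem isσStable_σ : IsσStable (σ w) ↔ IsσStable w := by
  refine ⟨fun ⟨x, hx⟩ => ⟨x, ?_⟩, fun h => h.of_isConj h.isConj_σ⟩
  rw [← σ_σFix] at hx
  simpa using isConj_apply σ⁻¹ hx

end Stability

/-- The commutator `aba⁻¹b⁻¹` of the generators. -/
def commGen : F := ga * gb * ga⁻¹ * gb⁻¹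

/-- `w` is conjugate to a power of the commutator of the generators. These are the elements that
are both `σ`-stable and `τ`-stable. -/
def IsCommPow (w : F) : Prop := ∃ m : ℤ, IsConj w (commGen ^ m)

section CommutatorPowers

variable {n : ℕ} {φ : MulAut F} {w w' : F}

theorem IsCommPow.of_isConj (h : IsCommPow w') (hw : IsConj w w') : IsCommPow w := by
  obtain ⟨m, hm⟩ := h
  exact ⟨m, hw.trans hm⟩

theorem IsChainC1.apply_commGen (h : IsChainC1 n φ) : φ commGen = commGen := by
  induction h with
  | one => rfl
  | σ_mul _ ih => rw [MulAut.mul_apply, ih]; simp [commGen, mul_assoc]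
  | τ_mul _ ih => rw [MulAut.mul_apply, ih]; simp [commGen, mul_assoc]

theorem IsChainC1.isCommPow_apply (h : IsChainC1 n φ) : IsCommPow (φ w) ↔ IsCommPow w := by
  refine ⟨fun ⟨m, hm⟩ => ⟨m, ?_⟩, fun ⟨m, hm⟩ => ⟨m, ?_⟩⟩
  · rw [← h.apply_commGen, ← map_zpow] at hm
    simpa using isConj_apply φ⁻¹ hm
  · simpa only [map_zpow, h.apply_commGen] using isConj_apply φ hm

theorem IsCommPow.isσStable (h : IsCommPow w) : IsσStable w := by
  obtain ⟨m, hm⟩ := h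
  refine ⟨(gb * ga⁻¹) ^ m, ?_⟩
  simpa [σFix, commGen] using hm

theorem swap_commGen : swap commGen = commGen⁻¹ := by simp [commGen, mul_assoc]

theorem IsCommPow.swap (h : IsCommPow w) : IsCommPow (swap w) := by
  obtain ⟨m, hm⟩ := h
  refine ⟨-m, ?_⟩
  simpa only [map_zpow, swap_commGen, inv_zpow'] using isConj_apply RankTwo.swap hm

theorem IsCommPow.isτStable (h : IsCommPow w) : IsτStable w := h.swap.isσStable

end CommutatorPowers

/-- The endomorphism `a ↦ b⁻¹a`, `b ↦ ab⁻¹`. Up to conjugation, its image is the preimage under `σ`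
of the subgroup `⟨a, bab⁻¹⟩` that defines `τ`-stability. -/
def χ : F →* F := FreeGroup.lift ![gb⁻¹ * ga, ga * gb⁻¹]

/-- The image of a letter under `χ`. -/
def χLetter (x : Fin 2 × Bool) : List (Fin 2 × Bool) :=
  if x = (0, true) then [(1, false), (0, true)]
  else if x = (0, false) then [(0, false), (1, true)]
  else if x = (1, true) then [(0, true), (1, false)]
  else [(1, true), (0, false)]

/-- The inverse of the image of a letter under the exchange of `a` and `b`. -/
def swapInvLetter : Fin 2 × Bool → Fin 2 × Bool := Prod.map (Equiv.swap 0 1) not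

section Chi

variable {l X Y : List (Fin 2 × Bool)}

theorem exists_isConj_χ_of_isτStable_σ {w : F} (h : IsτStable (σ w)) : ∃ x, IsConj w (χ x) := by
  obtain ⟨x, hx⟩ := h
  have hχ : swap (σFix x) = σ (gb * χ x * gb⁻¹) :=
    DFunLike.congr_fun (hom_ext (f := swap.toMonoidHom.comp σFix)
      (g := (σ * MulAut.conj gb).toMonoidHom.comp χ) (by simp [σFix, χ, mul_assoc])
      (by simp [σFix, χ, mul_assoc])) x
  have hw : IsConj w (gb * χ x * gb⁻¹) := by
    have hσw := isConj_apply swap hx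
    rw [swap_swap, hχ] at hσw
    simpa only [MulAut.inv_apply_self] using isConj_apply σ⁻¹ hσw
  exact ⟨x, hw.trans (isConj_iff.2 ⟨gb, rfl⟩).symm⟩

theorem mk_χLetter (x : Fin 2 × Bool) : FreeGroup.mk (χLetter x) = χ (FreeGroup.mk [x]) := by
  rcases letter_cases x with rfl | rfl | rfl | rfl
  · exact (lift_ga ..).symm
  · rw [mk_a_inv, map_inv, χ, lift_ga]; rfl
  · exact (lift_gb ..).symm
  · rw [mk_b_inv, map_inv, χ, lift_gb]; rfl

theorem mk_flatMap_χLetter (l : List (Fin 2 × Bool)) :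
    FreeGroup.mk (l.flatMap χLetter) = χ (FreeGroup.mk l) := by
  induction l with
  | nil => exact (map_one χ).symm
  | cons x l ih => rw [List.flatMap_cons, ← FreeGroup.mul_mk, ih, mk_cons, map_mul, mk_χLetter]

theorem isReduced_flatMap_χLetter (h : FreeGroup.IsReduced l) :
    FreeGroup.IsReduced (l.flatMap χLetter) := by
  induction l with
  | nil => exact .nil
  | cons x l ih =>
    obtain ⟨hx, hl⟩ := isReduced_cons_iff.1 h
    rw [List.flatMap_cons, FreeGroup.IsReduced, List.isChain_append]
    refine ⟨?_, ih hl, ?_⟩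
    · rcases letter_cases x with rfl | rfl | rfl | rfl <;> simp [χLetter]
    · cases l with
      | nil => simp
      | cons y l =>
        have hxy := hx y rfl
        rcases letter_cases x with rfl | rfl | rfl | rfl <;>
        rcases letter_cases y with rfl | rfl | rfl | rfl <;> simp [χLetter] at hxy ⊢

theorem isCyclicallyReduced_flatMap_χLetter (h : FreeGroup.IsCyclicallyReduced l) :
    FreeGroup.IsCyclicallyReduced (l.flatMap χLetter) := by
  rw [isCyclicallyReduced_iff_append_self] at h ⊢
  exact List.flatMap_append ▸ isReduced_flatMap_χLetter h

theorem hasBlock_χ_mk {i j : Fin 2}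
    (h : FreeGroup.IsCyclicallyReduced (X ++ (i, true) :: (j, true) :: Y)) :
    HasBlock 1 1 (χ (FreeGroup.mk (X ++ (i, true) :: (j, true) :: Y))) := by
  have h' := isCyclicallyReduced_flatMap_χLetter h
  have hword : (X ++ (i, true) :: (j, true) :: Y).flatMap χLetter =
      X.flatMap χLetter ++ ((χLetter (i, true) ++ χLetter (j, true)) ++ Y.flatMap χLetter) := by
    simp
  rw [← mk_flatMap_χLetter]
  rw [hword] at h' ⊢
  refine HasBlock.mk_append ?_ ?_ ?_ h' <;> fin_cases i <;> fin_cases j <;>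
    simp [χLetter, IsPosWord]

theorem isChain_or_hasBlock_χ (h : FreeGroup.IsCyclicallyReduced l) :
    l.IsChain (fun x y => x.2 ≠ y.2) ∨
      HasBlock 1 1 (χ (FreeGroup.mk l)) ∨ HasBlock 1 1 (χ (FreeGroup.mk l))⁻¹ := by
  refine or_iff_not_imp_left.2 fun hl => ?_
  rw [List.isChain_iff_forall_rel_of_append_cons_cons] at hl
  push Not at hl
  obtain ⟨⟨i, e⟩, ⟨j, _⟩, X, Y, rfl, rfl⟩ := hl
  cases e with
  | true => exact .inl (hasBlock_χ_mk h)
  | false =>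
    have hinv : FreeGroup.invRev (X ++ (i, false) :: (j, false) :: Y) =
        FreeGroup.invRev Y ++ (j, true) :: (i, true) :: FreeGroup.invRev X := by
      simp [FreeGroup.invRev]
    refine .inr ?_
    rw [← map_inv, FreeGroup.inv_mk, hinv]
    exact hasBlock_χ_mk (hinv ▸ isCyclicallyReduced_invRev h)

end Chi

section Alternating

variable {u w : F} {L : ℕ} {φ : MulAut F}

theorem exists_eq_flatten_replicate_of_isChain {α : Type*} {f : α → α} {x : α} {l : List α}
    (hf : f.Involutive) (hfix : f x ≠ x) (hx : ∀ y ∈ l.head?, y = x)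
    (hl : (l ++ [x]).IsChain fun y z => z = f y) :
    ∃ m, l = (List.replicate m [x, f x]).flatten := by
  induction l using List.twoStepInduction with
  | nil => exact ⟨0, rfl⟩
  | singleton y =>
    obtain rfl := hx y rfl
    exact absurd (by simpa using hl) hfix.symm
  | cons_cons y z l ih _ =>
    obtain rfl := hx y rfl
    simp only [List.cons_append, List.isChain_cons_cons] at hl
    obtain ⟨rfl, hl⟩ := hl
    obtain ⟨hhead, htail⟩ := List.isChain_cons.1 hl
    obtain ⟨m, rfl⟩ := ih (fun w hw => by rw [hhead w (by simp_all), hf]) htail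
    exact ⟨m + 1, rfl⟩

theorem swapInvLetter_involutive : swapInvLetter.Involutive := by
  unfold Function.Involutive; decide

theorem swapInvLetter_ne (x : Fin 2 × Bool) : swapInvLetter x ≠ x := by
  revert x; decide

theorem eq_swapInvLetter {x y : Fin 2 × Bool} (hred : x.1 = y.1 → x.2 = y.2) (h : x.2 ≠ y.2) :
    y = swapInvLetter x := by
  revert x y; decide

theorem isCommPow_χ_mk_pair (x : Fin 2 × Bool) (m : ℕ) :
    IsCommPow (χ (FreeGroup.mk [x, swapInvLetter x]) ^ m) := by
  have hpair : IsConj (χ (FreeGroup.mk [x, swapInvLetter x])) commGen ∨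
      IsConj (χ (FreeGroup.mk [x, swapInvLetter x])) commGen⁻¹ := by
    rw [mk_cons, map_mul]
    rcases letter_cases x with rfl | rfl | rfl | rfl
    · exact .inl (isConj_iff.2 ⟨gb, by simp [swapInvLetter, mk_a, mk_b_inv, χ, commGen, mul_assoc]⟩)
    · exact .inr (isConj_iff.2 ⟨ga, by simp [swapInvLetter, mk_a_inv, mk_b, χ, commGen, mul_assoc]⟩)
    · exact .inr (isConj_iff.2 ⟨gb, by simp [swapInvLetter, mk_a_inv, mk_b, χ, commGen, mul_assoc]⟩)
    · exact .inl (isConj_iff.2 ⟨ga, by simp [swapInvLetter, mk_a, mk_b_inv, χ, commGen, mul_assoc]⟩)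
  rcases hpair with h | h
  · exact ⟨m, by simpa using isConj_zpow h m⟩
  · exact ⟨-m, by simpa using isConj_zpow h m⟩

theorem isCommPow_χ_mk_of_isChain {l : List (Fin 2 × Bool)} (hred : FreeGroup.IsReduced (l ++ l))
    (hl : (l ++ l).IsChain fun x y => x.2 ≠ y.2) : IsCommPow (χ (FreeGroup.mk l)) := by
  cases l with
  | nil => exact ⟨0, by simp [← FreeGroup.one_eq_mk]⟩
  | cons x l =>
    have hnext : (x :: l ++ x :: l).IsChain fun y z => z = swapInvLetter y :=
      List.isChain_iff_getElem.2 fun i hi => eq_swapInvLetter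
        (List.isChain_iff_getElem.1 hred i hi) (List.isChain_iff_getElem.1 hl i hi)
    obtain ⟨m, hm⟩ := exists_eq_flatten_replicate_of_isChain (l := x :: l)
      swapInvLetter_involutive (swapInvLetter_ne x) (by simp) (hnext.infix ⟨[], l, by simp⟩)
    rw [hm, ← FreeGroup.pow_mk, map_pow]
    exact isCommPow_χ_mk_pair x m

theorem isCommPow_of_isτStable_σ (hφ : IsChainC1 L φ) (hL : 2 * cyclen u < L + 4)
    (hu : IsτStable (σ (φ u))) : IsCommPow u := by
  obtain ⟨x, hx⟩ := exists_isConj_χ_of_isτStable_σ hu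
  obtain ⟨l, hl, hxl⟩ := exists_isCyclicallyReduced_isConj x
  have hul : IsConj (φ u) (χ (FreeGroup.mk l)) := hx.trans (χ.map_isConj hxl)
  have hsq : IsConj (φ (u ^ 2)) (χ (FreeGroup.mk (l ++ l))) := by
    simpa only [← FreeGroup.mul_mk, map_mul, map_pow, ← pow_two] using! hul.pow 2
  have hno (v : F) (hv : cyclen v ≤ 2 * cyclen u) : ¬ HasBlock 1 1 (φ v) := fun hb => by
    have := hb.le_cyclen_of_isChainC1 hφ
    rw [min_self, one_mul] at this
    omega
  rcases isChain_or_hasBlock_χ (isCyclicallyReduced_append_self hl) with halt | hb | hb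
  · exact hφ.isCommPow_apply.1
      ((isCommPow_χ_mk_of_isChain (isCyclicallyReduced_iff_append_self.1 hl) halt).of_isConj hul)
  · exact absurd (hb.of_isConj hsq) (hno _ (cyclen_pow_le u 2))
  · refine absurd (hb.of_isConj ?_) (hno (u ^ 2)⁻¹ (cyclen_inv (u ^ 2) ▸ cyclen_pow_le u 2))
    exact map_inv φ (u ^ 2) ▸ isConj_inv hsq

theorem IsσStable.isCommPow (hσ : IsσStable w) (hτ : IsτStable w) : IsCommPow w := by
  have hchain := IsChainC1.one.σ_pow_mul (2 * cyclen w)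
  refine isCommPow_of_isτStable_σ hchain (by omega) (hτ.of_isConj ?_)
  simpa only [mul_one, pow_succ', MulAut.mul_apply] using hσ.isConj_σ_pow (2 * cyclen w + 1)

end Alternating

/-- The reduced word of `b ^ j`. -/
def bPowWord (j : ℤ) : List (Fin 2 × Bool) := List.replicate j.natAbs (1, decide (0 < j))

/-- The word of a list of syllables, where the syllable `(e, j)` stands for `b ^ j * a ^ (±1)` and
the sign of the exponent of `a` is positive if and only if `e` is `true`. -/
def syllableWord (s : List (Bool × ℤ)) : List (Fin 2 × Bool) :=
  s.flatMap fun x => bPowWord x.2 ++ [(0, x.1)]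

/-- The syllable `y` may follow the syllable `x` in a reduced word. -/
def NonCancelling (x y : Bool × ℤ) : Prop := x.1 ≠ y.1 → y.2 ≠ 0

section Syllables

variable {s : List (Bool × ℤ)} {x y : Bool × ℤ} {e : Bool} {l : List (Fin 2 × Bool)}

theorem mk_bPowWord (j : ℤ) : FreeGroup.mk (bPowWord j) = gb ^ j := by
  have hrep (n : ℕ) (x : Fin 2 × Bool) :
      FreeGroup.mk (List.replicate n x) = FreeGroup.mk [x] ^ n := by
    rw [FreeGroup.pow_mk, List.flatten_replicate_singleton]
  rw [bPowWord, hrep]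
  by_cases h : 0 < j
  · rw [decide_eq_true h, mk_b, ← zpow_natCast, Int.natAbs_of_nonneg h.le]
  · rw [decide_eq_false h, mk_b_inv, ← zpow_natCast, Int.ofNat_natAbs_of_nonpos (not_lt.1 h),
      zpow_neg, inv_zpow, inv_inv]

theorem cons_bPowWord {j : ℤ} (h : j ≠ 0 → decide (0 < j) = e) :
    (1, e) :: bPowWord j = bPowWord (j + if e then 1 else -1) := by
  rcases eq_or_ne j 0 with rfl | hj
  · cases e <;> rfl
  · obtain rfl := h hj
    rw [bPowWord, ← List.replicate_succ, bPowWord]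
    split_ifs with hpos <;> simp only [decide_eq_true_eq] at hpos <;> congr 3 <;> grind

theorem syllableWord_cons : syllableWord (x :: s) = bPowWord x.2 ++ (0, x.1) :: syllableWord s := by
  simp [syllableWord]

theorem syllableWord_append (s t : List (Bool × ℤ)) :
    syllableWord (s ++ t) = syllableWord s ++ syllableWord t :=
  List.flatMap_append

theorem mk_syllableWord_cons : FreeGroup.mk (syllableWord (x :: s)) =
    gb ^ x.2 * FreeGroup.mk [(0, x.1)] * FreeGroup.mk (syllableWord s) := by
  rw [syllableWord_cons, ← FreeGroup.mul_mk, mk_cons, mk_bPowWord, mul_assoc]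

theorem length_syllableWord_cons :
    (syllableWord (x :: s)).length = x.2.natAbs + 1 + (syllableWord s).length := by
  simp only [syllableWord_cons, bPowWord, List.length_append, List.length_replicate,
    List.length_cons]
  omega

theorem getLast?_syllableWord :
    (syllableWord s).getLast? = (s.map Prod.fst).getLast?.map (Prod.mk 0) := by
  rcases List.eq_nil_or_concat s with rfl | ⟨t, x, rfl⟩
  · rfl
  · simp [syllableWord]

theorem isReduced_cons_syllableWord :
    FreeGroup.IsReduced ((0, y.1) :: syllableWord s) ↔ (y :: s).IsChain NonCancelling := by
  induction s generalizing y with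
  | nil => simp [syllableWord]
  | cons x s ih =>
    rw [List.isChain_cons_cons, ← ih, syllableWord_cons, isReduced_cons_iff, bPowWord,
      isReduced_replicate_append (by simp)]
    refine and_congr_left' ?_
    rcases Nat.eq_zero_or_eq_succ_pred x.2.natAbs with h | h
    · simp [NonCancelling, Int.natAbs_eq_zero.1 h]
    · have : x.2 ≠ 0 := by omega
      rw [h]
      simp [NonCancelling, List.replicate_succ, this]

theorem isCyclicallyReduced_syllableWord (hy : (s.map Prod.fst).getLast? = some y.1) :
    FreeGroup.IsCyclicallyReduced (syllableWord s) ↔ (y :: s).IsChain NonCancelling := by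
  rw [isCyclicallyReduced_iff_cons (c := (0, y.1)) (by rw [getLast?_syllableWord, hy]; rfl),
    isReduced_cons_syllableWord]

theorem exists_syllableWord_eq (hl : FreeGroup.IsReduced l) (he : l.getLast? = some (0, e)) :
    ∃ s, syllableWord s = l := by
  induction l with
  | nil => exact ⟨[], rfl⟩
  | cons c l ih =>
    obtain ⟨i, d⟩ := c
    rcases eq_or_ne l [] with rfl | hne
    · obtain ⟨rfl, rfl⟩ : i = 0 ∧ d = e := by simpa using he
      exact ⟨[(d, 0)], rfl⟩
    obtain ⟨hhead, hl⟩ := isReduced_cons_iff.1 hl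
    obtain ⟨s, rfl⟩ := ih hl (by rwa [List.getLast?_cons_of_ne_nil hne] at he)
    fin_cases i
    · exact ⟨(d, 0) :: s, rfl⟩
    · obtain ⟨x, s, rfl⟩ := List.exists_cons_of_ne_nil (l := s) (by rintro rfl; exact hne rfl)
      refine ⟨(x.1, x.2 + if d then 1 else -1) :: s, ?_⟩
      rw [syllableWord_cons, syllableWord_cons, ← cons_bPowWord, List.cons_append]
      · rfl
      · intro hj
        obtain ⟨n, hn⟩ := Nat.exists_eq_succ_of_ne_zero (Int.natAbs_ne_zero.2 hj)
        have hmem : (1, decide (0 < x.2)) ∈ (syllableWord (x :: s)).head? := by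
          simp [syllableWord_cons, bPowWord, hn, List.replicate_succ]
        exact (hhead _ hmem rfl).symm

theorem exists_mk_eq_gb_zpow (hl : ∀ x ∈ l, x.1 = 1) : ∃ j : ℤ, FreeGroup.mk l = gb ^ j := by
  induction l with
  | nil => exact ⟨0, rfl⟩
  | cons c l ih =>
    obtain ⟨hc, hl⟩ := List.forall_mem_cons.1 hl
    obtain ⟨j, hj⟩ := ih hl
    obtain ⟨i, d⟩ := c
    obtain rfl : i = 1 := hc
    refine ⟨(if d then 1 else -1) + j, ?_⟩
    rw [mk_cons, hj, zpow_add]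
    cases d <;> simp [mk_b, mk_b_inv]

theorem exists_isConj_gb_zpow_or_syllableWord (w : F) : (∃ j : ℤ, IsConj w (gb ^ j)) ∨
    ∃ s e, (s.map Prod.fst).getLast? = some e ∧ FreeGroup.IsCyclicallyReduced (syllableWord s) ∧
      IsConj w (FreeGroup.mk (syllableWord s)) := by
  obtain ⟨l, hl, hconj⟩ := exists_isCyclicallyReduced_isConj w
  by_cases hb : ∀ x ∈ l, x.1 = 1
  · obtain ⟨j, hj⟩ := exists_mk_eq_gb_zpow hb
    exact .inl ⟨j, hj ▸ hconj⟩
  push Not at hb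
  obtain ⟨⟨i, e⟩, hmem, hi⟩ := hb
  obtain rfl : i = 0 := by fin_cases i <;> simp_all
  obtain ⟨X, Y, rfl⟩ := List.append_of_mem hmem
  rw [← List.singleton_append, ← List.append_assoc] at hl hconj
  have hrot := isCyclicallyReduced_append_comm hl
  have hlast : (Y ++ (X ++ [(0, e)])).getLast? = some (0, e) := by simp [List.getLast?_append]
  obtain ⟨s, hs⟩ := exists_syllableWord_eq hrot.isReduced hlast
  rw [← hs] at hlast hrot
  refine .inr ⟨s, e, ?_, hrot, hs ▸ hconj.trans (isConj_mk_append_comm _ _)⟩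
  simpa [getLast?_syllableWord] using hlast

end Syllables

/-- The effect of `σ ^ n` on a list of syllables preceded by an `a`-letter of sign `p`: every letter
`a` inserts `b ^ n` after itself and every letter `a⁻¹` inserts `b ^ (-n)` before itself. -/
def shear (n : ℤ) : Bool → List (Bool × ℤ) → List (Bool × ℤ)
  | _, [] => []
  | p, x :: s => (x.1, x.2 + (if p then n else 0) - if x.1 then 0 else n) :: shear n x.1 s

section Shear

variable {s : List (Bool × ℤ)} {y : Bool × ℤ} {p : Bool}

theorem map_fst_shear (n : ℤ) (p : Bool) (s : List (Bool × ℤ)) :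
    (shear n p s).map Prod.fst = s.map Prod.fst := by
  induction s generalizing p with
  | nil => rfl
  | cons x s ih => rw [shear, List.map_cons, List.map_cons, ih]

theorem isChain_nonCancelling_shear {y' : Bool × ℤ} (n : ℤ) (hy : y'.1 = y.1)
    (hs : (y :: s).IsChain NonCancelling) : (y' :: shear n y.1 s).IsChain NonCancelling := by
  induction s generalizing y y' with
  | nil => simp [shear]
  | cons x s ih =>
    rw [List.isChain_cons_cons] at hs
    refine .cons_cons ?_ (ih rfl hs.2)
    obtain ⟨hyx, -⟩ := hs
    obtain ⟨⟨p, i⟩, ⟨e, j⟩⟩ := y, x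
    cases p <;> cases e <;> simp_all [NonCancelling]

theorem σ_pow_gb (n : ℕ) : (σ ^ n) gb = gb := by
  induction n with
  | zero => rfl
  | succ n ih => rw [pow_succ', MulAut.mul_apply, ih, σ_gb]

theorem σ_pow_ga (n : ℕ) : (σ ^ n) ga = ga * gb ^ n := by
  induction n with
  | zero => simp
  | succ n ih => rw [pow_succ, MulAut.mul_apply, σ_ga, map_mul, ih, σ_pow_gb, mul_assoc, pow_succ]

theorem σ_pow_mk_a_letter (n : ℕ) (e : Bool) : (σ ^ n) (FreeGroup.mk [(0, e)]) =
    gb ^ (-if e then (0 : ℤ) else n) * FreeGroup.mk [(0, e)] * gb ^ (if e then (n : ℤ) else 0) := by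
  cases e
  · simp [mk_a_inv, σ_pow_ga]
  · simp [mk_a, σ_pow_ga]

theorem gb_zpow_mul_σ_pow_mk_syllableWord (n : ℕ) (p : Bool) (s : List (Bool × ℤ)) :
    gb ^ (if p then (n : ℤ) else 0) * (σ ^ n) (FreeGroup.mk (syllableWord s)) =
      FreeGroup.mk (syllableWord (shear n p s)) *
        gb ^ (if (s.map Prod.fst).getLastD p then (n : ℤ) else 0) := by
  induction s generalizing p with
  | nil => simp [shear, syllableWord, ← FreeGroup.one_eq_mk]
  | cons x s ih =>
    simp only [shear, mk_syllableWord_cons, List.map_cons, List.getLastD_cons, map_mul, map_zpow,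
      σ_pow_gb, σ_pow_mk_a_letter]
    rw [mul_assoc _ (FreeGroup.mk (syllableWord (shear _ _ _))), ← ih, sub_eq_add_neg, zpow_add,
      zpow_add]
    group

theorem cyclen_σ_pow_mk_syllableWord (n : ℕ) (hp : (s.map Prod.fst).getLast? = some p)
    (hs : FreeGroup.IsCyclicallyReduced (syllableWord s)) :
    cyclen ((σ ^ n) (FreeGroup.mk (syllableWord s))) = (syllableWord (shear n p s)).length := by
  have hred : FreeGroup.IsCyclicallyReduced (syllableWord (shear n p s)) := by
    rw [isCyclicallyReduced_syllableWord (y := (p, 0)) (by rwa [map_fst_shear])]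
    exact isChain_nonCancelling_shear n (y := (p, 0)) rfl
      ((isCyclicallyReduced_syllableWord hp).1 hs)
  rw [← cyclen_mk hred]
  refine cyclen_eq_of_isConj (isConj_iff.2 ⟨gb ^ (if p then (n : ℤ) else 0), ?_⟩)
  rw [gb_zpow_mul_σ_pow_mk_syllableWord, List.getLastD_eq_getLast?, hp, Option.getD_some,
    mul_inv_cancel_right]

end Shear

section Growth

variable {s : List (Bool × ℤ)} {y : Bool × ℤ} {p : Bool} {k L : ℕ} {φ : MulAut F} {u w : F}

theorem length_shear_le
    (hs : ∀ x ∈ s, (x.1 = true → -k ≤ x.2) ∧ (x.1 = false → x.2 ≤ k)) :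
    (syllableWord (shear k p s)).length ≤ (syllableWord (shear (k + 1) p s)).length := by
  induction s generalizing p with
  | nil => rfl
  | cons x s ih =>
    obtain ⟨hx, hs⟩ := List.forall_mem_cons.1 hs
    have := ih hs (p := x.1)
    rw [shear, shear, length_syllableWord_cons, length_syllableWord_cons]
    grind

theorem isChain_ne_of_length_shear_le
    (hs : ∀ x ∈ s, (x.1 = true → -k ≤ x.2) ∧ (x.1 = false → x.2 ≤ k))
    (hle : (syllableWord (shear (k + 1) y.1 s)).length ≤ (syllableWord (shear k y.1 s)).length) :
    (y :: s).IsChain fun x z => x.1 ≠ z.1 := by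
  induction s generalizing y with
  | nil => exact .singleton y
  | cons x s ih =>
    obtain ⟨hx, hs⟩ := List.forall_mem_cons.1 hs
    have := length_shear_le hs (p := x.1)
    rw [shear, shear, length_syllableWord_cons, length_syllableWord_cons] at hle
    refine .cons_cons ?_ (ih hs ?_)
    · grind
    · grind

theorem isσStable_gb_zpow (j : ℤ) : IsσStable (gb ^ j) :=
  ⟨ga ^ j, by simp only [σFix, map_zpow, lift_ga]; rfl⟩

theorem exists_mul_mk_syllableWord_eq (hs : (y :: s).IsChain fun x z => x.1 ≠ z.1) :
    ∃ z, (if y.1 then ga else 1) * FreeGroup.mk (syllableWord s) =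
      σFix z * if (s.map Prod.fst).getLastD y.1 then ga else 1 := by
  induction s generalizing y with
  | nil => exact ⟨1, by simp [syllableWord, ← FreeGroup.one_eq_mk]⟩
  | cons x s ih =>
    obtain ⟨hyx, hs⟩ := List.isChain_cons_cons.1 hs
    obtain ⟨z, hz⟩ := ih hs
    obtain ⟨z', hz'⟩ : ∃ z', (if y.1 then ga else 1) * (gb ^ x.2 * FreeGroup.mk [(0, x.1)]) =
        σFix z' * if x.1 then ga else 1 := by
      obtain ⟨⟨p, i⟩, ⟨e, j⟩⟩ := y, x
      cases p <;> cases e <;> simp only [ne_eq, not_true_eq_false] at hyx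
      · exact ⟨ga ^ j, by simp [σFix, mk_a]⟩
      · exact ⟨gb ^ j, by simp [σFix, mk_a_inv, conj_zpow, ← mul_assoc]⟩
    refine ⟨z' * z, ?_⟩
    rw [mk_syllableWord_cons, ← mul_assoc, hz', mul_assoc, hz, List.map_cons, List.getLastD_cons,
      map_mul, mul_assoc]

theorem isσStable_mk_syllableWord (hlast : (s.map Prod.fst).getLast? = some y.1)
    (hs : (y :: s).IsChain fun x z => x.1 ≠ z.1) : IsσStable (FreeGroup.mk (syllableWord s)) := by
  obtain ⟨z, hz⟩ := exists_mul_mk_syllableWord_eq hs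
  rw [List.getLastD_eq_getLast?, hlast, Option.getD_some] at hz
  exact ⟨z, isConj_iff.2 ⟨_, mul_inv_eq_of_eq_mul hz⟩⟩

theorem hasBlock_mk_syllableWord (hred : FreeGroup.IsCyclicallyReduced (syllableWord s)) {j : ℤ}
    (hmem : (true, j) ∈ s) (hj : j < -k) : HasBlock 0 k (FreeGroup.mk (syllableWord s)) := by
  obtain ⟨X, Y, rfl⟩ := List.append_of_mem hmem
  have hsplit : syllableWord (X ++ (true, j) :: Y) =
      syllableWord X ++ (List.replicate j.natAbs (1, false) ++ [(0, true)] ++ syllableWord Y) := by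
    simp [syllableWord_append, syllableWord_cons, bPowWord, show ¬ 0 < j by omega]
  rw [hsplit] at hred ⊢
  have hlt : k < j.natAbs := by omega
  exact .mk_append (by simp [IsPosWord, or_imp]) (by simp) (by simpa using hlt) hred

theorem hasBlock_mk_syllableWord_inv (hred : FreeGroup.IsCyclicallyReduced (syllableWord s)) {j : ℤ}
    (hmem : (false, j) ∈ s) (hj : k < j) : HasBlock 0 k (FreeGroup.mk (syllableWord s))⁻¹ := by
  obtain ⟨X, Y, rfl⟩ := List.append_of_mem hmem
  have hsplit : FreeGroup.invRev (syllableWord (X ++ (false, j) :: Y)) =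
      FreeGroup.invRev (syllableWord Y) ++ ((0, true) :: List.replicate j.natAbs (1, false) ++
        FreeGroup.invRev (syllableWord X)) := by
    simp [syllableWord_append, syllableWord_cons, bPowWord, show 0 < j by omega, FreeGroup.invRev]
  rw [FreeGroup.inv_mk, hsplit]
  have hlt : k < j.natAbs := by omega
  exact .mk_append (by simp [IsPosWord, or_imp]) (by simp) (by simpa using hlt)
    (hsplit ▸ isCyclicallyReduced_invRev hred)

theorem cyclen_σ_pow_succ_eq_iff (hw : ¬ HasBlock 0 k w) (hw' : ¬ HasBlock 0 k w⁻¹) :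
    cyclen ((σ ^ (k + 1)) w) = cyclen ((σ ^ k) w) ↔ IsσStable w := by
  refine ⟨fun h => ?_, fun h => cyclen_eq_of_isConj
    ((h.isConj_σ_pow (k + 1)).trans (h.isConj_σ_pow k).symm)⟩
  rcases exists_isConj_gb_zpow_or_syllableWord w with ⟨j, hj⟩ | ⟨s, p, hp, hred, hconj⟩
  · exact (isσStable_gb_zpow j).of_isConj hj
  have hbdd : ∀ x ∈ s, (x.1 = true → -k ≤ x.2) ∧ (x.1 = false → x.2 ≤ k) := by
    rintro ⟨e, j⟩ hmem
    refine ⟨fun he => ?_, fun he => ?_⟩ <;> obtain rfl : e = _ := he <;> by_contra! hj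
    · exact hw ((hasBlock_mk_syllableWord hred hmem hj).of_isConj hconj)
    · exact hw' ((hasBlock_mk_syllableWord_inv hred hmem hj).of_isConj (isConj_inv hconj))
  rw [cyclen_eq_of_isConj (isConj_apply (σ ^ (k + 1)) hconj),
    cyclen_eq_of_isConj (isConj_apply (σ ^ k) hconj), cyclen_σ_pow_mk_syllableWord _ hp hred,
    cyclen_σ_pow_mk_syllableWord _ hp hred, Nat.cast_succ] at h
  exact (isσStable_mk_syllableWord (y := (p, 0)) hp
    (isChain_ne_of_length_shear_le hbdd h.le)).of_isConj hconj

theorem IsChainC1.cyclen_σ_pow_succ_eq_iff (hφ : IsChainC1 L φ) (hu : cyclen u ≤ k + 1) :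
    cyclen ((σ ^ (k + 1)) (φ u)) = cyclen ((σ ^ k) (φ u)) ↔ IsσStable (φ u) := by
  have hno (v : F) (hv : cyclen v ≤ k + 1) : ¬ HasBlock 0 k (φ v) := fun hb => by
    have := hb.le_cyclen_of_isChainC1 hφ
    omega
  refine RankTwo.cyclen_σ_pow_succ_eq_iff (hno u hu) ?_
  rw [← map_inv]
  exact hno u⁻¹ (by rwa [cyclen_inv])

theorem IsChainC1.cyclen_τ_pow_succ_eq_iff (hφ : IsChainC1 L φ) (hu : cyclen u ≤ k + 1) :
    cyclen ((τ ^ (k + 1)) (φ u)) = cyclen ((τ ^ k) (φ u)) ↔ IsτStable (φ u) := by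
  have h := hφ.swap_conj.cyclen_σ_pow_succ_eq_iff (u := swap u) (k := k) (by rwa [cyclen_swap])
  rw [← cyclen_swap, ← cyclen_swap ((τ ^ k) _), swap_τ_pow, swap_τ_pow]
  simpa [MulAut.mul_apply, IsτStable] using h

end Growth

section Step

variable {L : ℕ} {φ : MulAut F} {u v : F}

theorem IsChainC1.isτStable_σ_apply_imp (hφ : IsChainC1 L φ) (hu : 2 * cyclen u < L + 4)
    (hσ : IsσStable (φ u) → IsσStable (φ v)) (hτ : IsτStable (φ u) → IsτStable (φ v))
    (h : IsτStable (σ (φ u))) : IsτStable (σ (φ v)) := by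
  have hφu : IsCommPow (φ u) := hφ.isCommPow_apply.2 (isCommPow_of_isτStable_σ hφ hu h)
  have hφv : IsCommPow (φ v) := (hσ hφu.isσStable).isCommPow (hτ hφu.isτStable)
  exact (IsChainC1.one.σ_mul.isCommPow_apply.2 hφv).isτStable

theorem IsChainC1.stable_σ_apply_iff (hφ : IsChainC1 L φ) (hu : 2 * cyclen u < L + 4)
    (hv : 2 * cyclen v < L + 4) (hσ : IsσStable (φ u) ↔ IsσStable (φ v))
    (hτ : IsτStable (φ u) ↔ IsτStable (φ v)) :
    (IsσStable (σ (φ u)) ↔ IsσStable (σ (φ v))) ∧ (IsτStable (σ (φ u)) ↔ IsτStable (σ (φ v))) := by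
  rw [isσStable_σ, isσStable_σ]
  exact ⟨hσ, hφ.isτStable_σ_apply_imp hu hσ.1 hτ.1, hφ.isτStable_σ_apply_imp hv hσ.2 hτ.2⟩

theorem IsChainC1.stable_τ_apply_iff (hφ : IsChainC1 L φ) (hu : 2 * cyclen u < L + 4)
    (hv : 2 * cyclen v < L + 4) (hσ : IsσStable (φ u) ↔ IsσStable (φ v))
    (hτ : IsτStable (φ u) ↔ IsτStable (φ v)) :
    (IsσStable (τ (φ u)) ↔ IsσStable (τ (φ v))) ∧ (IsτStable (τ (φ u)) ↔ IsτStable (τ (φ v))) := by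
  have h := hφ.swap_conj.stable_σ_apply_iff (u := swap u) (v := swap v) (by rwa [cyclen_swap])
    (by rwa [cyclen_swap]) (by simpa [MulAut.mul_apply, IsτStable] using hτ)
    (by simpa [MulAut.mul_apply, isτStable_swap] using hσ)
  simp only [MulAut.mul_apply, swap_inv, swap_swap, ← swap_τ, isτStable_swap] at h
  exact h.symm

end Step

end RankTwo

open RankTwo in
theorem stmt8_general (u v : F) (k : ℕ) (hu : cyclen u ≤ k + 1) (hv : cyclen v ≤ k + 1)
    (c : List (ℕ × ℕ)) (hc : 0 < chainLen c) (hlu : 2 * cyclen u ≤ chainLen c + 2)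
    (hlv : 2 * cyclen v ≤ chainLen c + 2)
    (H : ∀ c' : List (ℕ × ℕ), c' ≠ [] → chainLen c' + 1 = chainLen c →
      (cyclen ((σ ^ (k + 1)) (chainC1 c' u)) = cyclen ((σ ^ k) (chainC1 c' u)) ↔
        cyclen ((σ ^ (k + 1)) (chainC1 c' v)) = cyclen ((σ ^ k) (chainC1 c' v))) ∧
      (cyclen ((τ ^ (k + 1)) (chainC1 c' u)) = cyclen ((τ ^ k) (chainC1 c' u)) ↔
        cyclen ((τ ^ (k + 1)) (chainC1 c' v)) = cyclen ((τ ^ k) (chainC1 c' v)))) :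
    (cyclen ((σ ^ (k + 1)) (chainC1 c u)) = cyclen ((σ ^ k) (chainC1 c u)) ↔
      cyclen ((σ ^ (k + 1)) (chainC1 c v)) = cyclen ((σ ^ k) (chainC1 c v))) ∧
    (cyclen ((τ ^ (k + 1)) (chainC1 c u)) = cyclen ((τ ^ k) (chainC1 c u)) ↔
      cyclen ((τ ^ (k + 1)) (chainC1 c v)) = cyclen ((τ ^ k) (chainC1 c v))) := by
  have hchain := IsChainC1.of_chainC1 c
  simp only [hchain.cyclen_σ_pow_succ_eq_iff hu, hchain.cyclen_σ_pow_succ_eq_iff hv,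
    hchain.cyclen_τ_pow_succ_eq_iff hu, hchain.cyclen_τ_pow_succ_eq_iff hv]
  have hpred {L : ℕ} {φ : MulAut F} (hφ : IsChainC1 L φ) (hL : L + 1 = chainLen c) :
      (IsσStable (φ u) ↔ IsσStable (φ v)) ∧ (IsτStable (φ u) ↔ IsτStable (φ v)) := by
    obtain ⟨c', hne, rfl, rfl⟩ := hφ.exists_chainC1
    simpa only [hφ.cyclen_σ_pow_succ_eq_iff hu, hφ.cyclen_σ_pow_succ_eq_iff hv,
      hφ.cyclen_τ_pow_succ_eq_iff hu, hφ.cyclen_τ_pow_succ_eq_iff hv] using H c' hne hL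
  generalize chainC1 c = ψ at hchain ⊢
  generalize chainLen c = n at *
  cases hchain with
  | one => exact absurd hc (lt_irrefl 0)
  | σ_mul hφ =>
    obtain ⟨hσ, hτ⟩ := hpred hφ rfl
    exact hφ.stable_σ_apply_iff (by omega) (by omega) hσ hτ
  | τ_mul hφ =>
    obtain ⟨hσ, hτ⟩ := hpred hφ rfl
    exact hφ.stable_τ_apply_iff (by omega) (by omega) hσ hτ

/-- Corollary 4.4.5:  here `k = ‖u‖ + 1`. -/
theorem stmt8 (u v : F) (huv : cyclen v ≤ cyclen u)
    (c : List (ℕ × ℕ)) (hne : c ≠ []) (hlen : 2 * cyclen u + 3 ≤ chainLen c)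
    (H : ∀ c' : List (ℕ × ℕ), c' ≠ [] → chainLen c' < chainLen c →
      ((cyclen ((σ ^ (cyclen u + 2)) (chainC1 c' u)) = cyclen ((σ ^ (cyclen u + 1)) (chainC1 c' u)) ↔
        cyclen ((σ ^ (cyclen u + 2)) (chainC1 c' v)) = cyclen ((σ ^ (cyclen u + 1)) (chainC1 c' v))) ∧
       (cyclen ((τ ^ (cyclen u + 2)) (chainC1 c' u)) = cyclen ((τ ^ (cyclen u + 1)) (chainC1 c' u)) ↔
        cyclen ((τ ^ (cyclen u + 2)) (chainC1 c' v)) = cyclen ((τ ^ (cyclen u + 1)) (chainC1 c' v))))) :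
    (cyclen ((σ ^ (cyclen u + 2)) (chainC1 c u)) = cyclen ((σ ^ (cyclen u + 1)) (chainC1 c u)) ↔
      cyclen ((σ ^ (cyclen u + 2)) (chainC1 c v)) = cyclen ((σ ^ (cyclen u + 1)) (chainC1 c v))) ∧
    (cyclen ((τ ^ (cyclen u + 2)) (chainC1 c u)) = cyclen ((τ ^ (cyclen u + 1)) (chainC1 c u)) ↔
      cyclen ((τ ^ (cyclen u + 2)) (chainC1 c v)) = cyclen ((τ ^ (cyclen u + 1)) (chainC1 c v))) := by
  exact stmt8_general u v (cyclen u + 1) (by omega) (by omega) c (by omega) (by omega) (by omega)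
    fun c' hc' hlt => H c' hc' (by omega)
end
end
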